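/- arXiv:2604.25461 — 5 statements merged into one kernel-verified Lean document; each statement's English description precedes it below -/
import Mathlib

section
/- Let q = p^n be a prime power, r ≥ 2 an integer, k = (q^r − 1)/(q − 1), and 0 ≤ a,b ≤ q−2. For u, v ∈ 𝔽_q^×, let W_{u,v}(q,r) = #{(x_1,…,x_r) ∈ (𝔽_q∖{0,1})^r : ∏_{t=1}^r x_t = u and ∏_{t=1}^r (1 − x_t) = v}. Then (a,b)_{q−1} = (q^r + (−1)^r (q−2)^r − 2)/(q−1)^2 + (−1)^{r−1} · W_{(−1)^r ω^{ak}, ω^{bk}}(q,r). -/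
/-- `x` lies in the cyclotomic coset `C_a = ω^a ⟨ω^e⟩` of `Fˣ`. -/
def InCycCoset {F : Type*} [Field F] (ω : Fˣ) (e a : ℕ) (x : Fˣ) : Prop :=
  ∃ m : ℕ, x = ω ^ a * (ω ^ e) ^ m

/-- The cyclotomic number `(a,b)_e` : the number of `x ∈ C_a` with `x + 1 ∈ C_b`. -/
noncomputable def cycNum {F : Type*} [Field F] (ω : Fˣ) (e a b : ℕ) : ℕ :=
  Nat.card {x : Fˣ | InCycCoset ω e a x ∧ ∃ y : Fˣ, InCycCoset ω e b y ∧ (y : F) = (x : F) + 1}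

/-- The walk-count `W_{u,v}(q,r)`: the number of `r`-tuples from `𝔽_q ∖ {0,1}` with
`∏ x_t = u` and `∏ (1 - x_t) = v`. -/
noncomputable def walkCount (K : Type*) [Field K] (r : ℕ) (u v : K) : ℕ :=
  Nat.card {f : Fin r → K | (∀ t, f t ≠ 0 ∧ f t ≠ 1) ∧
    (∏ t, f t) = u ∧ (∏ t, (1 - f t)) = v}

/-!
For a multiplicative function `χ` on `K[X]`, where `K = 𝔽_q`, let `L_d` be the sum of `χ` over the
monic polynomials of degree `d` and `N_d` the sum of `Λ χ`, with `Λ` the von Mangoldt function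
(degree in place of logarithm). Since `∑_{g ∣ f} Λ g = deg f`, we have
`d L_d = ∑_{i + j = d} L_i N_j`; hence `N_r = (-1)^(r-1) L_1^r` as soon as `L_d = 0` for `d ≥ 2`.

Let `F = 𝔽_{q^r}`. Each monic `f` of degree `r` is the characteristic polynomial of exactly `Λ f`
elements of `F`, so `N_r = ∑_{x ∈ F} χ(charpoly x)`. Take `χ f = [(f 0, f 1)]` in the monoid ring
`ℤ[K × K]` modulo `S = ∑_w [w]`. The pair `(f 0, f 1)` is equidistributed for monic `f` of each
degree `d ≥ 2`, so `L_d = 0`. As `charpoly x` takes the values `norm (-x)` and `norm (1 - x)` at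
`0` and `1`, comparing coefficients in `N_r = (-1)^(r-1) L_1^r` relates the number of `x` with
prescribed `norm x` and `norm (1 + x)` to a walk count, up to a multiple of `S`. That multiple is
determined by the homomorphism `ℤ[K × K] → ℤ` sending units to `1` and nonunits to `0`. Finally,
membership in a cyclotomic coset is a condition on the norm.
-/

open Polynomial UniqueFactorizationMonoid
open Finset.HasAntidiagonal (antidiagonal)
open scoped IntermediateField

section MonicsOfDegree

variable (R : Type*) [CommRing R] [Nontrivial R] [Finite R]

theorem finite_setOf_monic_natDegree_eq (d : ℕ) :
    {f : R[X] | f.Monic ∧ f.natDegree = d}.Finite :=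
  Finite.of_equiv (Fin d → R)
    ((monicEquivDegreeLT d).trans (degreeLTEquiv R d).toEquiv).symm

/-- The monic polynomials of degree `d` over a finite ring. -/
noncomputable def monicsOfDegree (d : ℕ) : Finset R[X] :=
  (finite_setOf_monic_natDegree_eq R d).toFinset

variable {R}

theorem mem_monicsOfDegree {d : ℕ} {f : R[X]} :
    f ∈ monicsOfDegree R d ↔ f.Monic ∧ f.natDegree = d := by
  simp [monicsOfDegree]

theorem monicsOfDegree_zero : monicsOfDegree R 0 = {1} := by
  ext f
  rw [mem_monicsOfDegree, Finset.mem_singleton]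
  exact ⟨fun ⟨hf, hdeg⟩ => hf.natDegree_eq_zero.1 hdeg, fun h => by simp [h]⟩

theorem sum_monicsOfDegree_one [Fintype R] {M : Type*} [AddCommMonoid M] (φ : R[X] → M) :
    ∑ f ∈ monicsOfDegree R 1, φ f = ∑ c : R, φ (X + C c) := by
  refine (Finset.sum_nbij (fun c => X + C c) (fun c _ => ?_) (fun a _ b _ hab => ?_)
    (fun f hf => ?_) fun _ _ => rfl).symm
  · exact mem_monicsOfDegree.2 ⟨monic_X_add_C c, natDegree_X_add_C c⟩
  · exact C_injective (add_left_cancel hab)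
  · obtain ⟨hf, hdeg⟩ := mem_monicsOfDegree.1 hf
    exact ⟨f.coeff 0, by simp, (hf.eq_X_add_C hdeg).symm⟩

theorem add_mem_monicsOfDegree {d : ℕ} {f g : R[X]} (hf : f ∈ monicsOfDegree R d)
    (hg : g.degree < d) : f + g ∈ monicsOfDegree R d := by
  obtain ⟨hmonic, rfl⟩ := mem_monicsOfDegree.1 hf
  rw [← degree_eq_natDegree hmonic.ne_zero] at hg
  exact mem_monicsOfDegree.2 ⟨hmonic.add_of_left hg, natDegree_add_eq_left_of_degree_lt hg⟩

theorem card_filter_monicsOfDegree_map_eq {A : Type*} [AddCommGroup A] [DecidableEq A]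
    (φ : R[X] →+ A) {d : ℕ} (hφ : ∀ a, ∃ g : R[X], g.degree < d ∧ φ g = a) (a : A) :
    ((monicsOfDegree R d).filter (φ · = a)).card =
      ((monicsOfDegree R d).filter (φ · = 0)).card := by
  obtain ⟨g, hdeg, rfl⟩ := hφ a
  have hdeg' : (-g).degree < d := by rwa [degree_neg]
  refine Finset.card_nbij' (· + -g) (· + g) ?_ ?_ (by simp [Set.LeftInvOn])
    (by simp [Set.LeftInvOn, Set.RightInvOn])
  · intro f hf
    obtain ⟨hf, hfg⟩ := Finset.mem_filter.1 hf
    exact Finset.mem_filter.2 ⟨add_mem_monicsOfDegree hf hdeg', by simp [hfg]⟩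
  · intro f hf
    obtain ⟨hf, hf0⟩ := Finset.mem_filter.1 hf
    exact Finset.mem_filter.2 ⟨add_mem_monicsOfDegree hf hdeg, by simp [hf0]⟩

theorem exists_sum_monicsOfDegree_map_eq_nsmul {A M : Type*} [AddCommGroup A] [Fintype A]
    [AddCommMonoid M] (φ : R[X] →+ A) {d : ℕ}
    (hφ : ∀ a, ∃ g : R[X], g.degree < d ∧ φ g = a) (ψ : A → M) :
    ∃ n : ℕ, ∑ f ∈ monicsOfDegree R d, ψ (φ f) = n • ∑ a, ψ a := by
  classical
  refine ⟨((monicsOfDegree R d).filter (φ · = 0)).card, ?_⟩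
  rw [← Finset.sum_fiberwise' _ φ ψ, Finset.smul_sum]
  exact Finset.sum_congr rfl fun a _ => by
    rw [Finset.sum_const, card_filter_monicsOfDegree_map_eq φ hφ]

end MonicsOfDegree

section VonMangoldt

variable {K : Type*} [Field K]

open Classical in
/-- The monic divisors of a nonzero polynomial `f`, as the products of submultisets of its
monic irreducible factors. -/
noncomputable def monicDivisors (f : K[X]) : Finset K[X] :=
  ((normalizedFactors f).powerset.map Multiset.prod).toFinset

theorem mem_monicDivisors {f g : K[X]} (hf : f ≠ 0) :
    g ∈ monicDivisors f ↔ g.Monic ∧ g ∣ f := by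
  classical
  simp only [monicDivisors, Multiset.mem_toFinset, Multiset.mem_map, Multiset.mem_powerset]
  constructor
  · rintro ⟨s, hs, rfl⟩
    have hmonic : ∀ P ∈ s, P.Monic := fun P hP =>
      ((Polynomial.mem_normalizedFactors_iff hf).1 (Multiset.mem_of_le hs hP)).2.1
    exact ⟨by simpa using monic_multiset_prod_of_monic s id hmonic,
      (Multiset.prod_dvd_prod_of_le hs).trans (prod_normalizedFactors hf).dvd⟩
  · rintro ⟨hg, hgf⟩
    refine ⟨normalizedFactors g,
      (dvd_iff_normalizedFactors_le_normalizedFactors hg.ne_zero hf).1 hgf, ?_⟩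
    rw [prod_normalizedFactors_eq hg.ne_zero, hg.normalize_eq_self]

theorem pow_dvd_iff_le_count_normalizedFactors [DecidableEq K] {f P : K[X]} (hf : f ≠ 0)
    (hP : P ∈ normalizedFactors f) {i : ℕ} : P ^ i ∣ f ↔ i ≤ (normalizedFactors f).count P := by
  obtain ⟨hirr, hmonic, -⟩ := (Polynomial.mem_normalizedFactors_iff hf).1 hP
  rw [pow_dvd_iff_le_emultiplicity, emultiplicity_eq_count_normalizedFactors hirr hf,
    hmonic.normalize_eq_self, Nat.cast_le]

theorem natDegree_eq_sum_count_normalizedFactors [DecidableEq K] {f : K[X]} (hf : f.Monic) :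
    f.natDegree =
      ∑ P ∈ (normalizedFactors f).toFinset, (normalizedFactors f).count P * P.natDegree := by
  have hmonic : ∀ P ∈ normalizedFactors f, P.Monic := fun P hP =>
    ((Polynomial.mem_normalizedFactors_iff hf.ne_zero).1 hP).2.1
  calc f.natDegree = (normalizedFactors f).prod.natDegree := by
        rw [prod_normalizedFactors_eq hf.ne_zero, hf.normalize_eq_self]
    _ = ((normalizedFactors f).map natDegree).sum := natDegree_multiset_prod_of_monic _ hmonic
    _ = _ := Finset.sum_multiset_map_count _ _

theorem exists_monic_irreducible_pow_eq {g : K[X]} (hg : g.Monic) (hpow : IsPrimePow g) :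
    ∃ (P : K[X]) (i : ℕ), P.Monic ∧ Irreducible P ∧ i ≠ 0 ∧ P ^ i = g := by
  classical
  obtain ⟨P, i, hP, hi, rfl⟩ := hpow
  refine ⟨normalize P, i, monic_normalize hP.ne_zero, (normalize_associated P).irreducible_iff.2
    hP.irreducible, hi.ne', ?_⟩
  exact eq_of_monic_of_associated ((monic_normalize hP.ne_zero).pow i) hg
    (normalize_associated P).pow_pow

open Classical in
/-- The von Mangoldt function of `K[X]`, with the degree in the role of the logarithm: it is
`deg P` at the powers of an irreducible `P` and `0` elsewhere. -/
noncomputable def polyVonMangoldt (f : K[X]) : ℕ :=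
  if IsPrimePow f then (radical f).natDegree else 0

theorem polyVonMangoldt_pow {P : K[X]} (hmonic : P.Monic) (hP : Irreducible P) {i : ℕ}
    (hi : i ≠ 0) : polyVonMangoldt (P ^ i) = P.natDegree := by
  classical
  rw [polyVonMangoldt, if_pos (hP.prime.isPrimePow.pow hi), radical_pow_of_prime hP.prime hi,
    hmonic.normalize_eq_self]

theorem pow_inj_of_monic_irreducible {P Q : K[X]} (hPmonic : P.Monic) (hP : Irreducible P)
    (hQmonic : Q.Monic) (hQ : Irreducible Q) {i j : ℕ} (hi : i ≠ 0) (hj : j ≠ 0)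
    (h : P ^ i = Q ^ j) : P = Q ∧ i = j := by
  classical
  obtain rfl : P = Q := by
    rw [← hPmonic.normalize_eq_self, ← radical_pow_of_prime hP.prime hi, h,
      radical_pow_of_prime hQ.prime hj, hQmonic.normalize_eq_self]
  exact ⟨rfl, pow_injective_of_not_isUnit hP.not_isUnit hP.ne_zero h⟩

theorem sum_monicDivisors_eq_sum_pow [DecidableEq K] {M : Type*} [AddCommMonoid M]
    {φ : K[X] → M} (hφ : ∀ g, ¬IsPrimePow g → φ g = 0) {f : K[X]} (hf : f ≠ 0) :
    ∑ g ∈ monicDivisors f, φ g = ∑ P ∈ (normalizedFactors f).toFinset,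
      ∑ i ∈ Finset.Icc 1 ((normalizedFactors f).count P), φ (P ^ i) := by
  have hmem {P : K[X]} := Polynomial.mem_normalizedFactors_iff (p := P) hf
  rw [Finset.sum_sigma']
  refine (Finset.sum_of_injOn (fun y : (_ : K[X]) × ℕ => y.1 ^ y.2) ?_ ?_ ?_ fun _ _ => rfl).symm
  · rintro ⟨P, i⟩ hPi ⟨Q, j⟩ hQj heq
    simp only [Finset.coe_sigma, Set.mem_sigma_iff, SetLike.mem_coe, Multiset.mem_toFinset, hmem,
      Finset.mem_Icc] at hPi hQj
    obtain ⟨⟨hP, hPmonic, -⟩, hi, -⟩ := hPi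
    obtain ⟨⟨hQ, hQmonic, -⟩, hj, -⟩ := hQj
    obtain ⟨rfl, rfl⟩ :=
      pow_inj_of_monic_irreducible hPmonic hP hQmonic hQ
        (Nat.one_le_iff_ne_zero.1 hi) (Nat.one_le_iff_ne_zero.1 hj) heq
    rfl
  · rintro ⟨P, i⟩ hPi
    simp only [Finset.coe_sigma, Set.mem_sigma_iff, SetLike.mem_coe, Multiset.mem_toFinset,
      Finset.mem_Icc] at hPi
    obtain ⟨hP, -, hi⟩ := hPi
    exact (mem_monicDivisors hf).2 ⟨(hmem.1 hP).2.1.pow i,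
      (pow_dvd_iff_le_count_normalizedFactors hf hP).2 hi⟩
  · intro g hg himage
    obtain ⟨hgmonic, hgf⟩ := (mem_monicDivisors hf).1 hg
    refine hφ g fun hpow => himage ?_
    obtain ⟨P, i, hmonic, hirr, hi, rfl⟩ := exists_monic_irreducible_pow_eq hgmonic hpow
    have hP : P ∈ normalizedFactors f := hmem.2 ⟨hirr, hmonic, (dvd_pow_self P hi).trans hgf⟩
    have hle := (pow_dvd_iff_le_count_normalizedFactors hf hP).1 hgf
    exact ⟨⟨P, i⟩, Finset.mem_sigma.2 ⟨Multiset.mem_toFinset.2 hP,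
      Finset.mem_Icc.2 ⟨Nat.one_le_iff_ne_zero.2 hi, hle⟩⟩, rfl⟩

theorem sum_monicDivisors_polyVonMangoldt {f : K[X]} (hf : f.Monic) :
    ∑ g ∈ monicDivisors f, polyVonMangoldt g = f.natDegree := by
  classical
  rw [sum_monicDivisors_eq_sum_pow (φ := polyVonMangoldt) (fun g hg => if_neg hg) hf.ne_zero,
    natDegree_eq_sum_count_normalizedFactors hf]
  refine Finset.sum_congr rfl fun P hP => ?_
  obtain ⟨hirr, hmonic, -⟩ :=
    (Polynomial.mem_normalizedFactors_iff hf.ne_zero).1 (Multiset.mem_toFinset.1 hP)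
  rw [Finset.sum_congr rfl fun i hi => polyVonMangoldt_pow hmonic hirr
    (Nat.one_le_iff_ne_zero.1 (Finset.mem_Icc.1 hi).1)]
  simp

end VonMangoldt

section MonicSums

variable {K R : Type*} [Field K] [Finite K]

theorem sum_monicsOfDegree_sum_monicDivisors {M : Type*} [AddCommMonoid M]
    (φ : K[X] → K[X] → M) (d : ℕ) :
    ∑ f ∈ monicsOfDegree K d, ∑ g ∈ monicDivisors f, φ g f =
      ∑ ij ∈ antidiagonal d,
        ∑ gh ∈ monicsOfDegree K ij.1 ×ˢ monicsOfDegree K ij.2, φ gh.1 (gh.1 * gh.2) := by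
  rw [Finset.sum_sigma', Finset.sum_sigma']
  refine Eq.symm (Finset.sum_nbij (fun y => ⟨y.2.1 * y.2.2, y.2.1⟩) ?_ ?_ ?_ fun _ _ => rfl)
  · rintro ⟨⟨i, j⟩, g, h⟩ hy
    simp only [Finset.mem_sigma, Finset.HasAntidiagonal.mem_antidiagonal, Finset.mem_product,
      mem_monicsOfDegree] at hy ⊢
    obtain ⟨rfl, ⟨hg, rfl⟩, hh, rfl⟩ := hy
    exact ⟨⟨hg.mul hh, hg.natDegree_mul hh⟩,
      (mem_monicDivisors (hg.mul hh).ne_zero).2 ⟨hg, dvd_mul_right g h⟩⟩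
  · rintro ⟨⟨i, j⟩, g, h⟩ hy ⟨⟨i', j'⟩, g', h'⟩ hy' heq
    simp only [Finset.coe_sigma, Set.mem_sigma_iff, SetLike.mem_coe, Finset.mem_product,
      mem_monicsOfDegree] at hy hy'
    obtain ⟨-, ⟨hg, rfl⟩, -, rfl⟩ := hy
    obtain ⟨-, ⟨-, rfl⟩, -, rfl⟩ := hy'
    obtain ⟨hmul, rfl⟩ : g * h = g' * h' ∧ g = g' := by simpa using heq
    obtain rfl := mul_left_cancel₀ hg.ne_zero hmul
    rfl
  · rintro ⟨f, g⟩ hfg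
    simp only [Finset.coe_sigma, Set.mem_sigma_iff, SetLike.mem_coe, mem_monicsOfDegree] at hfg
    obtain ⟨⟨hf, rfl⟩, hgf⟩ := hfg
    obtain ⟨hg, h, rfl⟩ := (mem_monicDivisors hf.ne_zero).1 hgf
    have hh : h.Monic := hg.of_mul_monic_left hf
    exact ⟨⟨(g.natDegree, h.natDegree), g, h⟩,
      by simp [Finset.HasAntidiagonal.mem_antidiagonal, mem_monicsOfDegree, hg, hh,
        hg.natDegree_mul hh], rfl⟩

section CommSemiring

variable [CommSemiring R] (χ : K[X] →* R)

/-- The coefficient of `T ^ d` in the `L`-series `∑ χ(f) T ^ deg f` over monic `f`. -/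
noncomputable def monicSum (d : ℕ) : R :=
  ∑ f ∈ monicsOfDegree K d, χ f

/-- The coefficient of `T ^ d` in the logarithmic derivative `T L'/L` of the `L`-series of `χ`. -/
noncomputable def vonMangoldtSum (d : ℕ) : R :=
  ∑ f ∈ monicsOfDegree K d, polyVonMangoldt f * χ f

theorem monicSum_zero : monicSum χ 0 = 1 := by
  simp [monicSum, monicsOfDegree_zero]

theorem sum_antidiagonal_monicSum_mul_vonMangoldtSum (d : ℕ) :
    ∑ ij ∈ antidiagonal d, monicSum χ ij.1 * vonMangoldtSum χ ij.2 = d * monicSum χ d := by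
  have hdeg : ∀ f ∈ monicsOfDegree K d,
      ∑ g ∈ monicDivisors f, polyVonMangoldt g * χ f = d * χ f := by
    intro f hf
    obtain ⟨hmonic, rfl⟩ := mem_monicsOfDegree.1 hf
    rw [← Finset.sum_mul, ← Nat.cast_sum, sum_monicDivisors_polyVonMangoldt hmonic]
  symm
  calc d * monicSum χ d
      = ∑ f ∈ monicsOfDegree K d, ∑ g ∈ monicDivisors f, polyVonMangoldt g * χ f := by
        rw [monicSum, Finset.mul_sum, Finset.sum_congr rfl hdeg]
    _ = ∑ ij ∈ antidiagonal d, vonMangoldtSum χ ij.1 * monicSum χ ij.2 := by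
        rw [sum_monicsOfDegree_sum_monicDivisors (fun g f => (polyVonMangoldt g : R) * χ f)]
        simp only [vonMangoldtSum, monicSum, Finset.sum_mul_sum, ← Finset.sum_product', map_mul,
          mul_assoc]
    _ = ∑ ij ∈ antidiagonal d, monicSum χ ij.1 * vonMangoldtSum χ ij.2 := by
        rw [← Finset.Nat.sum_antidiagonal_swap]
        simp only [Prod.fst_swap, Prod.snd_swap, mul_comm]

theorem vonMangoldtSum_zero : vonMangoldtSum χ 0 = 0 := by
  simpa [monicSum_zero] using sum_antidiagonal_monicSum_mul_vonMangoldtSum χ 0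

theorem map_monicSum {S : Type*} [CommSemiring S] (π : R →+* S) (d : ℕ) :
    π (monicSum χ d) = monicSum ((π : R →* S).comp χ) d := by
  simp [monicSum]

theorem map_vonMangoldtSum {S : Type*} [CommSemiring S] (π : R →+* S) (d : ℕ) :
    π (vonMangoldtSum χ d) = vonMangoldtSum ((π : R →* S).comp χ) d := by
  simp [vonMangoldtSum]

end CommSemiring

theorem vonMangoldtSum_succ_of_monicSum_eq_zero [CommRing R] (χ : K[X] →* R)
    (hχ : ∀ d, 2 ≤ d → monicSum χ d = 0) (d : ℕ) :
    vonMangoldtSum χ (d + 1) = (-1) ^ d * monicSum χ 1 ^ (d + 1) := by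
  induction d with
  | zero =>
    simpa [monicSum_zero, vonMangoldtSum_zero, Finset.Nat.sum_antidiagonal_succ] using
      sum_antidiagonal_monicSum_mul_vonMangoldtSum χ 1
  | succ d ih =>
    have hrec := sum_antidiagonal_monicSum_mul_vonMangoldtSum χ (d + 2)
    simp only [Finset.Nat.sum_antidiagonal_succ, monicSum_zero, hχ _ (Nat.le_add_left 2 _),
      zero_add, one_mul, zero_mul, mul_zero, Finset.sum_const_zero, add_zero] at hrec
    rw [ih] at hrec
    linear_combination hrec

theorem vonMangoldtSum_succ_sub_mem [CommRing R] (χ : K[X] →* R) (I : Ideal R)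
    (hχ : ∀ d, 2 ≤ d → monicSum χ d ∈ I) (d : ℕ) :
    vonMangoldtSum χ (d + 1) - (-1) ^ d * monicSum χ 1 ^ (d + 1) ∈ I := by
  rw [← Ideal.Quotient.eq, map_mul, map_pow, map_pow, map_neg, map_one, map_vonMangoldtSum,
    map_monicSum]
  refine vonMangoldtSum_succ_of_monicSum_eq_zero _ (fun e he => ?_) d
  rw [← map_monicSum, Ideal.Quotient.eq_zero_iff_mem]
  exact hχ e he

end MonicSums

section Charpoly

theorem charpoly_blockDiagonal {m o R : Type*} [CommRing R] [Fintype m] [DecidableEq m]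
    [Fintype o] [DecidableEq o] (A : o → Matrix m m R) :
    (Matrix.blockDiagonal A).charpoly = ∏ i, (A i).charpoly := by
  have hchar : (Matrix.blockDiagonal A).charmatrix =
      Matrix.blockDiagonal fun i => (A i).charmatrix := by
    ext ⟨i, k⟩ ⟨j, l⟩
    by_cases hkl : k = l <;>
      simp [Matrix.charmatrix_apply, Matrix.blockDiagonal_apply, Matrix.diagonal_apply, hkl]
  simp only [Matrix.charpoly, hchar, Matrix.det_blockDiagonal]

variable {K F : Type*} [Field K] [Field F] [Algebra K F]

theorem charpoly_lmul_eq_minpoly_pow [FiniteDimensional K F] (x : F) :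
    (Algebra.lmul K F x).charpoly = minpoly K x ^ Module.finrank K⟮x⟯ F := by
  classical
  let pb := IntermediateField.adjoin.powerBasis (Algebra.IsIntegral.isIntegral (R := K) x)
  let b := Module.finBasis K⟮x⟯ F
  have hgen : algebraMap K⟮x⟯ F pb.gen = x := by
    simp [pb]
  calc (Algebra.lmul K F x).charpoly
      = (Algebra.leftMulMatrix (pb.basis.smulTower b) (algebraMap K⟮x⟯ F pb.gen)).charpoly := by
        rw [hgen, ← LinearMap.charpoly_toMatrix _ (pb.basis.smulTower b),
          Algebra.leftMulMatrix_apply]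
    _ = minpoly K pb.gen ^ Module.finrank K⟮x⟯ F := by
        rw [Algebra.smulTower_leftMulMatrix_algebraMap, charpoly_blockDiagonal,
          Finset.prod_const, charpoly_leftMulMatrix, Finset.card_univ, Fintype.card_fin]
    _ = minpoly K x ^ Module.finrank K⟮x⟯ F := by
        rw [← minpoly.algebraMap_eq (algebraMap K⟮x⟯ F).injective, hgen]

theorem eval_charpoly_lmul [FiniteDimensional K F] (x : F) (c : K) :
    (Algebra.lmul K F x).charpoly.eval c = Algebra.norm K (algebraMap K F c - x) := by
  rw [LinearMap.eval_charpoly, Algebra.norm_apply, map_sub (Algebra.lmul K F), AlgHom.commutes]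

theorem charpoly_lmul_eq_pow_iff [FiniteDimensional K F] {P : K[X]} (hmonic : P.Monic)
    (hP : Irreducible P) {i : ℕ} (hdeg : (P ^ i).natDegree = Module.finrank K F) (x : F) :
    (Algebra.lmul K F x).charpoly = P ^ i ↔ minpoly K x = P := by
  have hx : IsIntegral K x := Algebra.IsIntegral.isIntegral x
  have hi : i ≠ 0 := by
    rintro rfl
    simp [Module.finrank_pos.ne] at hdeg
  rw [charpoly_lmul_eq_minpoly_pow]
  constructor
  · exact fun h => (pow_inj_of_monic_irreducible (minpoly.monic hx) (minpoly.irreducible hx)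
      hmonic hP Module.finrank_pos.ne' hi h).1
  · rintro rfl
    rw [natDegree_pow, ← IntermediateField.adjoin.finrank hx,
      ← Module.finrank_mul_finrank K K⟮x⟯ F, mul_comm] at hdeg
    rw [Nat.eq_of_mul_eq_mul_left Module.finrank_pos hdeg]

theorem card_minpoly_eq [Finite K] [Finite F] {P : K[X]} (hmonic : P.Monic) (hP : Irreducible P)
    (hdvd : P.natDegree ∣ Module.finrank K F) :
    Nat.card {x : F // minpoly K x = P} = P.natDegree := by
  have : Fact (Irreducible P) := ⟨hP⟩
  have hroot (x : F) : minpoly K x = P ↔ x ∈ P.aroots F := by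
    rw [mem_aroots]
    refine ⟨?_, fun ⟨_, h⟩ => (minpoly.eq_of_irreducible_of_monic hP h hmonic).symm⟩
    rintro rfl
    exact ⟨hmonic.ne_zero, minpoly.aeval K x⟩
  have : Module.Finite K (AdjoinRoot P) := (AdjoinRoot.powerBasis hmonic.ne_zero).finite
  have : Finite (AdjoinRoot P) := Module.finite_of_finite K
  have hfinrank : Module.finrank K (AdjoinRoot P) = P.natDegree :=
    (AdjoinRoot.powerBasis hmonic.ne_zero).finrank
  calc Nat.card {x : F // minpoly K x = P}
      = Nat.card (AdjoinRoot P →ₐ[K] F) := Nat.card_congr <|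
        (Equiv.subtypeEquivRight hroot).trans (AdjoinRoot.equiv F K P hmonic.ne_zero).symm
    _ = P.natDegree := by
        rw [FiniteField.natCard_algHom_of_finrank_dvd (hfinrank ▸ hdvd), hfinrank]

theorem card_charpoly_lmul_eq [Finite K] [Finite F] {g : K[X]} (hg : g.Monic)
    (hdeg : g.natDegree = Module.finrank K F) :
    Nat.card {x : F // (Algebra.lmul K F x).charpoly = g} = polyVonMangoldt g := by
  have : FiniteDimensional K F := Module.Finite.of_finite
  by_cases hpow : IsPrimePow g
  · obtain ⟨P, i, hmonic, hP, hi, rfl⟩ := exists_monic_irreducible_pow_eq hg hpow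
    rw [polyVonMangoldt_pow hmonic hP hi,
      Nat.card_congr (Equiv.subtypeEquivRight (charpoly_lmul_eq_pow_iff hmonic hP hdeg)),
      card_minpoly_eq hmonic hP ⟨i, by rw [← hdeg, natDegree_pow, mul_comm]⟩]
  · rw [polyVonMangoldt, if_neg hpow, Nat.card_eq_zero]
    refine Or.inl ⟨fun ⟨x, hx⟩ => hpow ?_⟩
    rw [← hx, charpoly_lmul_eq_minpoly_pow]
    exact (minpoly.irreducible (Algebra.IsIntegral.isIntegral x)).prime.isPrimePow.pow
      Module.finrank_pos.ne'

theorem vonMangoldtSum_finrank [Finite K] [Fintype F] {R : Type*} [CommSemiring R]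
    (χ : K[X] →* R) :
    vonMangoldtSum χ (Module.finrank K F) = ∑ x : F, χ (Algebra.lmul K F x).charpoly := by
  classical
  have hmaps (x : F) (_ : x ∈ Finset.univ) :
      (Algebra.lmul K F x).charpoly ∈ monicsOfDegree K (Module.finrank K F) :=
    mem_monicsOfDegree.2 ⟨LinearMap.charpoly_monic _, LinearMap.charpoly_natDegree _⟩
  rw [← Finset.sum_fiberwise_of_maps_to' hmaps, vonMangoldtSum]
  refine Finset.sum_congr rfl fun g hg => ?_
  obtain ⟨hmonic, hdeg⟩ := mem_monicsOfDegree.1 hg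
  rw [Finset.sum_const, nsmul_eq_mul, ← Fintype.card_subtype, ← Nat.card_eq_fintype_card,
    card_charpoly_lmul_eq hmonic hdeg]

end Charpoly

section UnitAugmentation

variable (R M : Type*) [CommSemiring R] [CommMonoid M]

/-- The algebra homomorphism from the monoid algebra of `M` to its coefficient ring that sends the
units of `M` to `1` and all other elements of `M` to `0`. -/
noncomputable def unitAugmentation : MonoidAlgebra R M →ₐ[R] R :=
  MonoidAlgebra.lift R R M (1 : MulChar M R).toMonoidHom

variable {R M}

theorem unitAugmentation_of_isUnit {m : M} (hm : IsUnit m) :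
    unitAugmentation R M (.of R M m) = 1 := by
  rw [unitAugmentation, MonoidAlgebra.lift_of, MulChar.coe_toMonoidHom, MulChar.one_apply hm]

theorem unitAugmentation_of_not_isUnit {m : M} (hm : ¬IsUnit m) :
    unitAugmentation R M (.of R M m) = 0 := by
  rw [unitAugmentation, MonoidAlgebra.lift_of, MulChar.coe_toMonoidHom, MulChar.map_nonunit _ hm]

theorem unitAugmentation_sum_of {ι : Type*} [Fintype ι] (h : ι → M) :
    unitAugmentation R M (∑ i, .of R M (h i)) = Nat.card {i // IsUnit (h i)} := by
  classical
  have hboole (m : M) : unitAugmentation R M (.of R M m) = if IsUnit m then 1 else 0 := by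
    split_ifs with hm
    exacts [unitAugmentation_of_isUnit hm, unitAugmentation_of_not_isUnit hm]
  rw [map_sum, Nat.card_eq_fintype_card, Fintype.card_subtype, ← Finset.sum_boole]
  exact Finset.sum_congr rfl fun i _ => hboole (h i)

theorem coeff_sum_of {ι : Type*} [Fintype ι] (h : ι → M) (m : M) :
    (∑ i, MonoidAlgebra.of R M (h i)).coeff m = Nat.card {i // h i = m} := by
  classical
  rw [MonoidAlgebra.coeff_sum, Finset.sum_apply', Nat.card_eq_fintype_card, Fintype.card_subtype,
    ← Finset.sum_boole]
  exact Finset.sum_congr rfl fun i _ => Finsupp.single_apply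

theorem coeff_unit_sum_of_mul [Fintype M] (s : MonoidAlgebra R M) (u : Mˣ) :
    ((∑ m, .of R M m) * s).coeff u = unitAugmentation R M s := by
  induction s using MonoidAlgebra.induction_on with
  | of m =>
    rw [Finset.sum_mul]
    simp only [← map_mul]
    rw [coeff_sum_of]
    by_cases hm : IsUnit m
    · obtain ⟨v, rfl⟩ := hm
      have : Unique {m : M // m * v = u} :=
        { default := ⟨u * ↑v⁻¹, by simp⟩
          uniq := fun m => Subtype.ext (by simp [← m.2]) }
      rw [Nat.card_unique, Nat.cast_one, unitAugmentation_of_isUnit v.isUnit]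
    · have : IsEmpty {l : M // l * m = u} :=
        ⟨fun l => hm (isUnit_of_mul_isUnit_right (l.2 ▸ u.isUnit))⟩
      rw [Nat.card_of_isEmpty, Nat.cast_zero, unitAugmentation_of_not_isUnit hm]
  | add s t hs ht => rw [mul_add, MonoidAlgebra.coeff_add, Finsupp.add_apply, hs, ht, map_add]
  | smul c s hs => rw [mul_smul_comm, MonoidAlgebra.coeff_smul_apply, hs, map_smul]

theorem unitAugmentation_eq_card_units_mul_coeff [Fintype M] {t : MonoidAlgebra R M}
    (ht : t ∈ Ideal.span {∑ m, MonoidAlgebra.of R M m}) (u : Mˣ) :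
    unitAugmentation R M t = Nat.card Mˣ * t.coeff u := by
  obtain ⟨s, rfl⟩ := Ideal.mem_span_singleton.1 ht
  have hcard : Nat.card {m : M // IsUnit m} = Nat.card Mˣ :=
    Nat.card_congr Submonoid.unitsTypeEquivIsUnitSubmonoid.symm.toEquiv
  rw [coeff_unit_sum_of_mul, map_mul, unitAugmentation_sum_of, hcard]

end UnitAugmentation

section EvalPair

variable (K : Type*) [Field K]

/-- Evaluation at `0` and at `1`. -/
noncomputable def evalPairHom : K[X] →+* K × K :=
  (evalRingHom 0).prod (evalRingHom 1)

/-- The universal multiplicative function of `(f 0, f 1)`, for `f : K[X]`. -/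
noncomputable def evalPairChar : K[X] →* MonoidAlgebra ℤ (K × K) :=
  (MonoidAlgebra.of ℤ (K × K)).comp (evalPairHom K)

variable {K}

theorem evalPairHom_apply (f : K[X]) : evalPairHom K f = (f.eval 0, f.eval 1) :=
  rfl

theorem evalPairChar_apply (f : K[X]) :
    evalPairChar K f = .of ℤ (K × K) (f.eval 0, f.eval 1) :=
  rfl

theorem exists_degree_lt_evalPairHom_eq {d : ℕ} (hd : 2 ≤ d) (w : K × K) :
    ∃ g : K[X], g.degree < d ∧ evalPairHom K g = w := by
  refine ⟨C (w.2 - w.1) * X + C w.1, degree_linear_le.trans_lt ?_, ?_⟩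
  · exact_mod_cast hd
  · simp [evalPairHom_apply]

theorem monicSum_evalPairChar_mem [Fintype K] {d : ℕ} (hd : 2 ≤ d) :
    monicSum (evalPairChar K) d ∈ Ideal.span {∑ w : K × K, MonoidAlgebra.of ℤ (K × K) w} := by
  obtain ⟨n, hn⟩ := exists_sum_monicsOfDegree_map_eq_nsmul (evalPairHom K : K[X] →+ K × K)
    (exists_degree_lt_evalPairHom_eq hd) (MonoidAlgebra.of ℤ (K × K))
  exact Ideal.mem_span_singleton.2 ⟨n, hn.trans (nsmul_eq_mul' _ n)⟩

theorem monicSum_evalPairChar_one [Fintype K] :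
    monicSum (evalPairChar K) 1 = ∑ c : K, .of ℤ (K × K) (c, 1 + c) := by
  simp [monicSum, sum_monicsOfDegree_one, evalPairChar_apply]

theorem monicSum_evalPairChar_one_pow [Fintype K] (r : ℕ) :
    monicSum (evalPairChar K) 1 ^ r =
      ∑ f : Fin r → K, .of ℤ (K × K) (∏ t, f t, ∏ t, (1 + f t)) := by
  simp only [monicSum_evalPairChar_one, Fintype.sum_pow, prod_mk_prod, map_prod]

theorem vonMangoldtSum_evalPairChar_finrank [Finite K] (F : Type*) [Field F] [Fintype F]
    [Algebra K F] :
    vonMangoldtSum (evalPairChar K) (Module.finrank K F) =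
      ∑ x : F, .of ℤ (K × K) (Algebra.norm K x, Algebra.norm K (1 + x)) := by
  rw [vonMangoldtSum_finrank, ← Equiv.sum_comp (Equiv.neg F)]
  simp only [evalPairChar_apply, eval_charpoly_lmul, Equiv.neg_apply, map_zero, map_one,
    sub_neg_eq_add, zero_add]

theorem card_ne_zero_and_one_add_ne_zero (E : Type*) [Field E] [Finite E] :
    (Nat.card {x : E // x ≠ 0 ∧ 1 + x ≠ 0} : ℤ) = Nat.card E - 2 := by
  classical
  have := Fintype.ofFinite E
  have hcompl : (Finset.univ.filter fun x : E => x ≠ 0 ∧ 1 + x ≠ 0) = {0, -1}ᶜ := by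
    ext x
    simp [add_comm (1 : E), add_eq_zero_iff_eq_neg]
  rw [Nat.card_eq_fintype_card, Fintype.card_subtype, hcompl, Finset.card_compl,
    Finset.card_pair (neg_ne_zero.2 one_ne_zero).symm, Nat.cast_sub Fintype.one_lt_card,
    Nat.card_eq_fintype_card, Nat.cast_two]

theorem unitAugmentation_monicSum_evalPairChar_one [Finite K] :
    unitAugmentation ℤ (K × K) (monicSum (evalPairChar K) 1) = Nat.card K - 2 := by
  have := Fintype.ofFinite K
  rw [monicSum_evalPairChar_one, unitAugmentation_sum_of, ← card_ne_zero_and_one_add_ne_zero]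
  simp only [Prod.isUnit_iff, isUnit_iff_ne_zero]

theorem unitAugmentation_vonMangoldtSum_evalPairChar [Finite K] (F : Type*) [Field F] [Finite F]
    [Algebra K F] :
    unitAugmentation ℤ (K × K) (vonMangoldtSum (evalPairChar K) (Module.finrank K F)) =
      Nat.card F - 2 := by
  have := Fintype.ofFinite F
  rw [vonMangoldtSum_evalPairChar_finrank, unitAugmentation_sum_of,
    ← card_ne_zero_and_one_add_ne_zero]
  simp only [Prod.isUnit_iff, isUnit_iff_ne_zero, ne_eq, Algebra.norm_eq_zero_iff]

theorem card_units_prod_self [Finite K] : (Nat.card (K × K)ˣ : ℤ) = (Nat.card K - 1) ^ 2 := by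
  rw [Nat.card_congr MulEquiv.prodUnits.toEquiv, Nat.card_prod, Nat.card_units, Nat.cast_mul,
    Nat.cast_sub Nat.card_pos, Nat.cast_one, sq]

theorem card_prod_eq_walkCount (r : ℕ) (u v : Kˣ) :
    Nat.card {f : Fin r → K // ∏ t, f t = u ∧ ∏ t, (1 + f t) = v} =
      walkCount K r ((-1) ^ r * u) v := by
  refine Nat.card_congr ((Equiv.neg _).subtypeEquiv fun f => ?_)
  have hprod : ∏ t, -f t = (-1) ^ r * ∏ t, f t := by simp [Finset.prod_neg]
  have hsign : (-1 : K) ^ r ≠ 0 := pow_ne_zero r (neg_ne_zero.2 one_ne_zero)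
  simp only [Equiv.neg_apply, Set.mem_ofPred_eq, Pi.neg_apply, sub_neg_eq_add, hprod,
    mul_right_inj' hsign, neg_ne_zero]
  refine ⟨fun ⟨hu, hv⟩ => ⟨fun t => ⟨?_, ?_⟩, hu, hv⟩, And.right⟩
  · exact Finset.prod_ne_zero_iff.1 (hu ▸ u.ne_zero) t (Finset.mem_univ t)
  · intro ht
    exact Finset.prod_ne_zero_iff.1 (hv ▸ v.ne_zero) t (Finset.mem_univ t) (by simp [← ht])

theorem card_norm_sub_walkCount_mul {F : Type*} [Finite K] [Field F] [Finite F] [Algebra K F]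
    {m : ℕ} (hm : Module.finrank K F = m + 1) (u v : Kˣ) :
    (Nat.card {x : F // Algebra.norm K x = u ∧ Algebra.norm K (1 + x) = v} -
        (-1) ^ m * walkCount K (m + 1) ((-1) ^ (m + 1) * u) v : ℤ) * (Nat.card K - 1) ^ 2 =
      Nat.card F - 2 - (-1) ^ m * (Nat.card K - 2) ^ (m + 1) := by
  have := Fintype.ofFinite K
  have := Fintype.ofFinite F
  set T := vonMangoldtSum (evalPairChar K) (Module.finrank K F) -
    (-1 : ℤ) ^ m • monicSum (evalPairChar K) 1 ^ (m + 1) with hT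
  have hmem : T ∈ Ideal.span {∑ w : K × K, MonoidAlgebra.of ℤ (K × K) w} := by
    rw [hT, hm, zsmul_eq_mul, Int.cast_pow, Int.cast_neg, Int.cast_one]
    exact vonMangoldtSum_succ_sub_mem _ _ (fun _ => monicSum_evalPairChar_mem) m
  have haug : unitAugmentation ℤ (K × K) T =
      Nat.card F - 2 - (-1) ^ m * (Nat.card K - 2) ^ (m + 1) := by
    rw [hT, map_sub, map_zsmul, map_pow, smul_eq_mul,
      unitAugmentation_vonMangoldtSum_evalPairChar, unitAugmentation_monicSum_evalPairChar_one]
  have hcoeff : T.coeff (u, v) =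
      Nat.card {x : F // Algebra.norm K x = u ∧ Algebra.norm K (1 + x) = v} -
        (-1) ^ m * walkCount K (m + 1) ((-1) ^ (m + 1) * u) v := by
    rw [hT, vonMangoldtSum_evalPairChar_finrank, monicSum_evalPairChar_one_pow,
      MonoidAlgebra.coeff_sub, Finsupp.sub_apply, MonoidAlgebra.coeff_smul_apply, coeff_sum_of,
      coeff_sum_of, smul_eq_mul, ← card_prod_eq_walkCount]
    simp only [Prod.mk.injEq]
  rw [← haug, ← hcoeff, mul_comm, ← card_units_prod_self]
  exact (unitAugmentation_eq_card_units_mul_coeff hmem (MulEquiv.prodUnits.symm (u, v))).symm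

end EvalPair

section Cosets

variable {K F : Type*} [Field K] [Field F] [Finite F] [Algebra K F] {ω : Fˣ}

theorem inCycCoset_iff_pow_eq {k e : ℕ} (hord : orderOf ω = k * e) (a : ℕ) {x : Fˣ}
    (hx : x ∈ Subgroup.zpowers ω) : InCycCoset ω e a x ↔ x ^ k = (ω ^ a) ^ k := by
  have hω : IsOfFinOrder ω := isOfFinOrder_of_finite ω
  have hk : 0 < k := Nat.pos_of_mul_pos_right (hord ▸ hω.orderOf_pos)
  constructor
  · rintro ⟨m, rfl⟩
    have hone : ((ω ^ e) ^ m) ^ k = 1 := by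
      rw [← pow_mul, ← pow_mul, ← mul_assoc, mul_right_comm, mul_comm e, ← hord, pow_mul,
        pow_orderOf_eq_one, one_pow]
    rw [mul_pow, hone, mul_one]
  · intro h
    obtain ⟨i, hi : ω ^ i = x / ω ^ a⟩ := hω.mem_powers_iff_mem_zpowers.2
      (div_mem hx (pow_mem (Subgroup.mem_zpowers ω) a))
    have hdvd : k * e ∣ k * i := by
      rw [← hord, orderOf_dvd_iff_pow_eq_one, mul_comm, pow_mul, hi, div_pow, h, div_self']
    obtain ⟨m, rfl⟩ := Nat.dvd_of_mul_dvd_mul_left hk hdvd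
    exact ⟨m, by rw [← pow_mul, hi, mul_div_cancel]⟩

theorem inCycCoset_iff_norm_eq (hω : ∀ x : Fˣ, x ∈ Subgroup.zpowers ω) (a : ℕ) (x : Fˣ) :
    InCycCoset ω (Nat.card K - 1) a x ↔
      Algebra.norm K (x : F) = Algebra.norm K (ω : F) ^ a := by
  have : Finite K := Finite.of_injective _ (algebraMap K F).injective
  have hdvd : Nat.card K - 1 ∣ Nat.card F - 1 := by
    have : Module.Finite K F := Module.Finite.of_finite
    simpa [Module.natCard_eq_pow_finrank (K := K) (V := F)] using
      Nat.sub_dvd_pow_sub_pow (Nat.card K) 1 (Module.finrank K F)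
  have hord : orderOf ω = (Nat.card F - 1) / (Nat.card K - 1) * (Nat.card K - 1) := by
    rw [orderOf_eq_card_of_forall_mem_zpowers hω, Nat.card_units, Nat.div_mul_cancel hdvd]
  rw [inCycCoset_iff_pow_eq hord a (hω x), ← map_pow, ← (algebraMap K F).injective.eq_iff,
    FiniteField.algebraMap_norm_eq_pow, FiniteField.algebraMap_norm_eq_pow, Units.ext_iff]
  push_cast
  rfl

theorem cycNum_eq_card_norm (hω : ∀ x : Fˣ, x ∈ Subgroup.zpowers ω) (a b : ℕ) :
    cycNum ω (Nat.card K - 1) a b =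
      Nat.card {x : F // Algebra.norm K x = Algebra.norm K (ω : F) ^ a ∧
        Algebra.norm K (1 + x) = Algebra.norm K (ω : F) ^ b} := by
  have hne {y : F} {c : ℕ} (hy : Algebra.norm K y = Algebra.norm K (ω : F) ^ c) : y ≠ 0 := by
    rintro rfl
    have : Module.Finite K F := Module.Finite.of_finite
    exact pow_ne_zero c (Algebra.norm_ne_zero_iff.2 ω.ne_zero) (hy.symm.trans Algebra.norm_zero)
  refine Nat.card_congr (Equiv.ofBijective (fun x => ⟨(x : Fˣ), ?_⟩) ⟨?_, ?_⟩)
  · obtain ⟨x, hx, y, hy, hyx⟩ := x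
    rw [inCycCoset_iff_norm_eq hω] at hx hy
    exact ⟨hx, by rwa [add_comm, ← hyx]⟩
  · exact fun x y hxy => Subtype.ext (Units.ext (congrArg Subtype.val hxy))
  · rintro ⟨x, hx, hy⟩
    exact ⟨⟨.mk0 x (hne hx), (inCycCoset_iff_norm_eq hω a _).2 hx, .mk0 (1 + x) (hne hy),
      (inCycCoset_iff_norm_eq hω b _).2 hy, add_comm _ _⟩, rfl⟩

end Cosets

/-- The Cayley-digraph formula for the cyclotomic number:
`(a,b)_{q-1} = (q^r + (-1)^r (q-2)^r - 2)/(q-1)^2 + (-1)^{r-1} W_{(-1)^r ω^{ak}, ω^{bk}}(q,r)`,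
where `ζ = ω^k` viewed in `𝔽_q`. -/
theorem cycNum_eq_walkCount {p n q r k : ℕ} (hp : p.Prime) (hn : 1 ≤ n) (hq : q = p ^ n)
    (hr : 2 ≤ r) (hk : k = (q ^ r - 1) / (q - 1))
    {K F : Type*} [Field K] [Field F] [Fintype K] [Fintype F] [Algebra K F]
    (hK : Fintype.card K = q) (hF : Fintype.card F = q ^ r)
    (ω : Fˣ) (hω : ∀ x : Fˣ, x ∈ Subgroup.zpowers ω)
    (ζ : K) (hζ : algebraMap K F ζ = (ω : F) ^ k)
    (a b : ℕ) (ha : a ≤ q - 2) (hb : b ≤ q - 2) :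
    (cycNum ω (q - 1) a b : ℝ) =
      ((q : ℝ) ^ r + (-1 : ℝ) ^ r * ((q : ℝ) - 2) ^ r - 2) / ((q : ℝ) - 1) ^ 2 +
        (-1 : ℝ) ^ (r - 1) * (walkCount K r ((-1 : K) ^ r * ζ ^ a) (ζ ^ b) : ℝ) := by
  rw [← Nat.card_eq_fintype_card] at hK hF
  have hq1 : 1 < q := hK ▸ Finite.one_lt_card
  have hfinrank : Module.finrank K F = r := (Nat.pow_right_inj hq1).1 <| by
    rw [← hF, ← hK, Module.natCard_eq_pow_finrank (K := K) (V := F)]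
  obtain ⟨m, rfl⟩ : ∃ m, r = m + 1 := ⟨r - 1, by omega⟩
  have hnorm : Algebra.norm K (ω : F) = ζ := (algebraMap K F).injective <| by
    rw [FiniteField.algebraMap_norm_eq_pow, hF, hK, ← hk, hζ]
  have hζ0 : ζ ≠ 0 := hnorm ▸ Algebra.norm_ne_zero_iff.2 ω.ne_zero
  have hcount := card_norm_sub_walkCount_mul hfinrank (.mk0 ζ hζ0 ^ a) (.mk0 ζ hζ0 ^ b)
  simp only [Units.val_pow_eq_pow_val, Units.val_mk0, ← hnorm] at hcount
  rw [← cycNum_eq_card_norm hω, hnorm, hF, hK] at hcount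
  have hcountR := congrArg (Int.cast : ℤ → ℝ) hcount
  push_cast at hcountR
  have hq0 : (q : ℝ) - 1 ≠ 0 := sub_ne_zero.2 (by exact_mod_cast hq1.ne')
  rw [Nat.add_sub_cancel, ← sub_eq_iff_eq_add, eq_div_iff (pow_ne_zero 2 hq0), hcountR]
  ring
end

section
/- Let ℓ be an odd prime, q = p^n a prime power, r = ℓ, k = (q^ℓ − 1)/(q − 1), and 0 ≤ a,b ≤ q−2. Define T_ℓ(a,b) = {x ∈ 𝔽_q : x^ℓ = ω^{ak} and (x+1)^ℓ = ω^{bk}}. If p = ℓ, then #T_ℓ(a,b) = 1 when 1 + ω^{ak} − ω^{bk} = 0 and #T_ℓ(a,b) = 0 when 1 + ω^{ak} − ω^{bk} ≠ 0. If p ≠ ℓ, then 0 ≤ #T_ℓ(a,b) ≤ ℓ − 1. -/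
/-!
In characteristic `p` the `p ^ m`-th power map is additive, so `(x + 1) ^ p ^ m = x ^ p ^ m + 1`:
the second equation follows from the first one or contradicts it, and the first one has exactly one
solution over a perfect ring. If instead `ℓ` is nonzero in the ring, then subtracting the two
equations makes `x` a point of a fibre of the polynomial `(X + 1) ^ ℓ - X ^ ℓ`, whose leading term
is `ℓ * X ^ (ℓ - 1)`.
-/

open Polynomial

/-- The set `T_ℓ` of the solutions of `x ^ ℓ = c` and `(x + 1) ^ ℓ = d`, with arbitrary ring
elements `c` and `d` as right-hand sides in place of powers of a generator. -/
def shiftedPowFiber {R : Type*} [Semiring R] (ℓ : ℕ) (c d : R) : Set R :=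
  {x | x ^ ℓ = c ∧ (x + 1) ^ ℓ = d}

section Frobenius

variable {R : Type*} [CommRing R] (p m : ℕ) [ExpChar R p] {c d : R}

theorem shiftedPowFiber_expChar_pow_eq_singleton [PerfectRing R p] (h : 1 + c - d = 0) :
    shiftedPowFiber (p ^ m) c d = {(iterateFrobeniusEquiv R p m).symm c} := by
  ext x
  have second_of_first : x ^ p ^ m = c → (x + 1) ^ p ^ m = d := fun hx ↦ by
    rw [add_pow_expChar_pow, hx, one_pow]
    linear_combination h
  rw [Set.mem_singleton_iff, RingEquiv.eq_symm_apply, iterateFrobeniusEquiv_def]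
  exact and_iff_left_of_imp second_of_first

theorem shiftedPowFiber_expChar_pow_eq_empty (h : 1 + c - d ≠ 0) :
    shiftedPowFiber (p ^ m) c d = ∅ := by
  refine Set.eq_empty_of_forall_notMem fun x ⟨hc, hd⟩ ↦ h ?_
  rw [add_pow_expChar_pow, one_pow] at hd
  linear_combination hd - hc

end Frobenius

theorem natDegree_X_add_one_pow_sub_X_pow {R : Type*} [CommRing R] {ℓ : ℕ} (hℓ : (ℓ : R) ≠ 0) :
    ((X + 1) ^ ℓ - X ^ ℓ : R[X]).natDegree = ℓ - 1 := by
  have ℓ_pos : 0 < ℓ := Nat.pos_of_ne_zero fun h ↦ hℓ (by simp [h])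
  have coeff_eq (i : ℕ) : ((X + 1) ^ ℓ - X ^ ℓ : R[X]).coeff i =
      (ℓ.choose i : R) - if i = ℓ then 1 else 0 := by
    rw [coeff_sub, coeff_X_add_one_pow, coeff_X_pow]
  refine natDegree_eq_of_le_of_coeff_ne_zero ?_ ?_
  · refine natDegree_le_iff_coeff_eq_zero.mpr fun i hi ↦ ?_
    obtain rfl | hlt : i = ℓ ∨ ℓ < i := by lia
    · simp [coeff_eq]
    · simp [coeff_eq, Nat.choose_eq_zero_of_lt hlt, hlt.ne']
  · have choose_pred : ℓ.choose (ℓ - 1) = ℓ := by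
      rw [Nat.choose_symm ℓ_pos, Nat.choose_one_right]
    rwa [coeff_eq, choose_pred, if_neg (by lia), sub_zero]

section Domain

variable {R : Type*} [CommRing R] [IsDomain R]

theorem encard_setOf_eval_eq_le_natDegree {f : R[X]} (hf : 0 < f.natDegree) (e : R) :
    {x | f.eval x = e}.encard ≤ f.natDegree := by
  classical
  have f_sub_ne_zero : f - C e ≠ 0 := fun h ↦ by
    rw [sub_eq_zero.mp h, natDegree_C] at hf
    exact hf.false
  have fiber_eq_roots : {x | f.eval x = e} = ((f - C e).roots.toFinset : Set R) := by
    ext x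
    simp [f_sub_ne_zero, sub_eq_zero]
  rw [fiber_eq_roots, Set.encard_coe_eq_coe_finsetCard, Nat.cast_le]
  calc (f - C e).roots.toFinset.card
      ≤ (f - C e).roots.card := Multiset.toFinset_card_le _
    _ ≤ f.natDegree := card_roots_sub_C' (natDegree_pos_iff_degree_pos.mp hf)

theorem encard_shiftedPowFiber_le {ℓ : ℕ} (hℓ : (ℓ : R) ≠ 0) (hℓ_one : ℓ ≠ 1) (c d : R) :
    (shiftedPowFiber ℓ c d).encard ≤ (ℓ - 1 : ℕ) := by
  have ℓ_ne_zero : ℓ ≠ 0 := fun h ↦ hℓ (by simp [h])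
  have natDegree_eq := natDegree_X_add_one_pow_sub_X_pow hℓ
  have subset_fiber :
      shiftedPowFiber ℓ c d ⊆ {x | ((X + 1) ^ ℓ - X ^ ℓ : R[X]).eval x = d - c} :=
    fun x ⟨hc, hd⟩ ↦ by simp [hc, hd]
  calc (shiftedPowFiber ℓ c d).encard
      ≤ {x | ((X + 1) ^ ℓ - X ^ ℓ : R[X]).eval x = d - c}.encard :=
        Set.encard_le_encard subset_fiber
    _ ≤ ((X + 1) ^ ℓ - X ^ ℓ : R[X]).natDegree :=
        encard_setOf_eval_eq_le_natDegree (by lia) (d - c)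
    _ = (ℓ - 1 : ℕ) := by rw [natDegree_eq]

theorem card_T_odd_prime_general (p : ℕ) [Fact p.Prime] [CharP R p] [PerfectRing R p] (ℓ : ℕ)
    (c d : R) :
    (∀ m, ℓ = p ^ m →
      (1 + c - d = 0 → (shiftedPowFiber ℓ c d).encard = 1) ∧
      (1 + c - d ≠ 0 → (shiftedPowFiber ℓ c d).encard = 0)) ∧
    (¬ p ∣ ℓ → ℓ ≠ 1 → (shiftedPowFiber ℓ c d).encard ≤ (ℓ - 1 : ℕ)) := by
  refine ⟨?_, fun hdvd hℓ_one ↦ ?_⟩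
  · rintro m rfl
    refine ⟨fun h ↦ ?_, fun h ↦ ?_⟩
    · rw [shiftedPowFiber_expChar_pow_eq_singleton p m h, Set.encard_singleton]
    · rw [shiftedPowFiber_expChar_pow_eq_empty p m h, Set.encard_empty]
  · exact encard_shiftedPowFiber_le (mt (CharP.cast_eq_zero_iff R p ℓ).mp hdvd) hℓ_one c d

end Domain

/-- Counting the set `T_ℓ(a,b) = {x ∈ 𝔽_q : x^ℓ = ζ^a, (x+1)^ℓ = ζ^b}` for an odd prime `ℓ`,
where `ζ = ω^k` is a generator of `𝔽_q^×`: if `p = ℓ` then `#T_ℓ(a,b)` is `1` or `0`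
according as `1 + ζ^a - ζ^b` is zero or not, and if `p ≠ ℓ` then `#T_ℓ(a,b) ≤ ℓ - 1`. -/
theorem card_T_odd_prime {p n q ℓ : ℕ} (hp : p.Prime) (hn : 1 ≤ n) (hq : q = p ^ n)
    (hℓ : ℓ.Prime) (hodd : Odd ℓ)
    {K : Type*} [Field K] [Fintype K] (hK : Fintype.card K = q)
    (ζ : Kˣ) (hζ : ∀ x : Kˣ, x ∈ Subgroup.zpowers ζ)
    (a b : ℕ) (ha : a ≤ q - 2) (hb : b ≤ q - 2) :
    (p = ℓ →
      (1 + (ζ : K) ^ a - (ζ : K) ^ b = 0 →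
        Nat.card {x : K | x ^ ℓ = (ζ : K) ^ a ∧ (x + 1) ^ ℓ = (ζ : K) ^ b} = 1) ∧
      (1 + (ζ : K) ^ a - (ζ : K) ^ b ≠ 0 →
        Nat.card {x : K | x ^ ℓ = (ζ : K) ^ a ∧ (x + 1) ^ ℓ = (ζ : K) ^ b} = 0)) ∧
    (p ≠ ℓ →
      Nat.card {x : K | x ^ ℓ = (ζ : K) ^ a ∧ (x + 1) ^ ℓ = (ζ : K) ^ b} ≤ ℓ - 1) := by
  have : Fact p.Prime := ⟨hp⟩
  have : CharP K p := charP_of_card_eq_prime_pow (hK.trans hq)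
  obtain ⟨card_of_eq, card_le⟩ := card_T_odd_prime_general p ℓ ((ζ : K) ^ a) ((ζ : K) ^ b)
  refine ⟨fun hpℓ ↦ ?_, fun hpℓ ↦ ?_⟩
  · obtain ⟨card_one, card_zero⟩ := card_of_eq 1 (by rw [pow_one, hpℓ])
    exact ⟨fun h ↦ congrArg ENat.toNat (card_one h), fun h ↦ congrArg ENat.toNat (card_zero h)⟩
  · have p_not_dvd : ¬ p ∣ ℓ := mt (Nat.prime_dvd_prime_iff_eq hp hℓ).mp hpℓ
    exact ENat.toNat_le_of_le_natCast (card_le p_not_dvd hℓ.ne_one)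
end

section
/- Let ℓ be an odd prime, q = p^n a prime power, r = ℓ, k = (q^ℓ − 1)/(q − 1), and 0 ≤ a,b ≤ q−2. Then 0 ≤ (a,b)_{q−1} ≤ ℓ·q^{ℓ−2} + 1 if p = ℓ, and 0 ≤ (a,b)_{q−1} ≤ ℓ·q^{ℓ−2} + ℓ − 1 if p ≠ ℓ. -/
/-! Each `x` counted by `(a,b)_{q-1}` satisfies `x ^ k = A` and `(x + 1) ^ k = B` for constants `A`
and `B`, because `k` annihilates `ω ^ (q - 1)`. Write `k = m + Q` with `Q = q ^ (r - 1)` and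
`m = 1 + q + ⋯ + q ^ (r - 2)`. Since `Q` is a power of the characteristic,
`(x + 1) ^ k = (x + 1) ^ m * (x ^ Q + 1)`, and multiplying by `x ^ m` eliminates the large power
`x ^ Q`: what remains is the equation `(x + 1) ^ m * (x ^ m + A) = B * x ^ m` of degree only `2 * m`
in `x`, and `2 * m ≤ r * q ^ (r - 2) + 1`. -/

section PowerEquations

open Polynomial

variable {R : Type*}

theorem natDegree_X_add_one_pow_mul_X_pow_add_C [Semiring R] [Nontrivial R] {m : ℕ} (hm : m ≠ 0)
    (A : R) :
    ((X + 1) ^ m * (X ^ m + C A) : R[X]).natDegree = 2 * m := by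
  have monic_X_add_one : (X + 1 : R[X]).Monic := monic_X_add_C 1
  have natDegree_X_add_one : (X + 1 : R[X]).natDegree = 1 := natDegree_X_add_C 1
  rw [(monic_X_add_one.pow m).natDegree_mul (monic_X_pow_add_C A hm),
    monic_X_add_one.natDegree_pow, natDegree_X_add_one, natDegree_X_pow_add_C]
  ring

theorem natDegree_X_add_one_pow_mul_sub [Ring R] [Nontrivial R] {m : ℕ} (hm : m ≠ 0) (A B : R) :
    ((X + 1) ^ m * (X ^ m + C A) - C B * X ^ m : R[X]).natDegree = 2 * m := by
  rw [natDegree_sub_eq_left_of_natDegree_lt, natDegree_X_add_one_pow_mul_X_pow_add_C hm]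
  rw [natDegree_X_add_one_pow_mul_X_pow_add_C hm]
  exact (natDegree_C_mul_X_pow_le B m).trans_lt (by lia)

theorem add_one_pow_mul_eq_of_pow_eq [CommSemiring R] (p : ℕ) [ExpChar R p] {m s : ℕ} {x A B : R}
    (hA : x ^ (m + p ^ s) = A) (hB : (x + 1) ^ (m + p ^ s) = B) :
    (x + 1) ^ m * (x ^ m + A) = B * x ^ m := by
  rw [← hA, ← hB, pow_add, pow_add, add_pow_expChar_pow, one_pow]
  ring

theorem ncard_pow_eq_and_add_one_pow_eq_le [CommRing R] [IsDomain R] (p : ℕ) [ExpChar R p] {m : ℕ}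
    (hm : m ≠ 0) (s : ℕ) (A B : R) :
    {x : R | x ^ (m + p ^ s) = A ∧ (x + 1) ^ (m + p ^ s) = B}.ncard ≤ 2 * m := by
  set P : R[X] := (X + 1) ^ m * (X ^ m + C A) - C B * X ^ m
  have natDegree_P : P.natDegree = 2 * m := natDegree_X_add_one_pow_mul_sub hm A B
  have P_ne_zero : P ≠ 0 := ne_zero_of_natDegree_gt (n := 0) (by lia)
  have subset_rootSet :
      {x : R | x ^ (m + p ^ s) = A ∧ (x + 1) ^ (m + p ^ s) = B} ⊆ P.rootSet R := by
    rintro x ⟨hA, hB⟩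
    simp [mem_rootSet, P_ne_zero, P, add_one_pow_mul_eq_of_pow_eq p hA hB]
  calc
    _ ≤ (P.rootSet R).ncard := Set.ncard_le_ncard subset_rootSet (P.rootSet_finite R)
    _ ≤ P.natDegree := ncard_rootSet_le P R
    _ = 2 * m := natDegree_P

end PowerEquations

theorem InCycCoset.pow_eq {F : Type*} [Field F] {ω x : Fˣ} {e a k : ℕ}
    (hx : InCycCoset ω e a x) (hk : (ω ^ e) ^ k = 1) : x ^ k = (ω ^ a) ^ k := by
  obtain ⟨t, rfl⟩ := hx
  rw [mul_pow, pow_right_comm (ω ^ e), hk, one_pow, mul_one]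

theorem two_le_of_card_eq_pow {α : Type*} [Fintype α] [Nontrivial α] {q r : ℕ}
    (hα : Fintype.card α = q ^ r) : 2 ≤ q := by
  have one_lt_pow : 1 < q ^ r := hα ▸ Fintype.one_lt_card
  exact lt_of_not_ge fun hq ↦ one_lt_pow.not_ge (pow_le_one₀ (Nat.zero_le q) hq)

theorem pow_sub_one_pow_geom_sum_eq_one {G₀ : Type*} [GroupWithZero G₀] [Fintype G₀] {q r : ℕ}
    (hG₀ : Fintype.card G₀ = q ^ r) (u : G₀ˣ) :
    (u ^ (q - 1)) ^ (∑ i ∈ Finset.range r, q ^ i) = 1 := by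
  have one_le_q : 1 ≤ q := one_le_two.trans (two_le_of_card_eq_pow hG₀)
  rw [← pow_mul, mul_comm, geom_sum_mul_of_one_le one_le_q, ← hG₀,
    ← Nat.card_eq_fintype_card, ← Nat.card_units, pow_card_eq_one']

section FiniteField

variable {F : Type*} [Field F]

theorem cycNum_le_ncard_pow_eq [Finite F] {ω : Fˣ} {e k : ℕ} (hk : (ω ^ e) ^ k = 1) (a b : ℕ) :
    cycNum ω e a b ≤
      {x : F | x ^ k = (ω ^ a : Fˣ) ^ k ∧ (x + 1) ^ k = (ω ^ b : Fˣ) ^ k}.ncard := by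
  refine Set.ncard_le_ncard_of_injOn Units.val ?_ Units.val_injective.injOn
  rintro x ⟨hx, y, hy, hyx⟩
  rw [Set.mem_ofPred_eq, ← hyx]
  exact_mod_cast And.intro (hx.pow_eq hk) (hy.pow_eq hk)

variable [Fintype F] {q r : ℕ}

theorem exists_expChar_and_eq_pow_of_card_eq_pow (hr : r ≠ 0) (hF : Fintype.card F = q ^ r) :
    ∃ p n : ℕ, ExpChar F p ∧ q = p ^ n := by
  obtain ⟨p, hchar⟩ := CharP.exists F
  obtain ⟨N, hp, hcard⟩ := FiniteField.card F p
  obtain ⟨n, -, hq⟩ := (Nat.dvd_prime_pow hp).1 (hcard ▸ hF ▸ dvd_pow_self q hr)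
  exact ⟨p, n, .prime hp, hq⟩

theorem cycNum_le_two_mul_geom_sum (hr : 2 ≤ r) (hF : Fintype.card F = q ^ r) (ω : Fˣ) (a b : ℕ) :
    cycNum ω (q - 1) a b ≤ 2 * ∑ i ∈ Finset.range (r - 1), q ^ i := by
  obtain ⟨p, n, hchar, hq⟩ := exists_expChar_and_eq_pow_of_card_eq_pow (by lia) hF
  set m := ∑ i ∈ Finset.range (r - 1), q ^ i
  have m_ne_zero : m ≠ 0 := (geom_sum_pos (Nat.zero_le q) (by lia)).ne'
  have geom_sum_eq : ∑ i ∈ Finset.range r, q ^ i = m + p ^ (n * (r - 1)) := by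
    rw [pow_mul, ← hq, ← Finset.sum_range_succ, Nat.sub_add_cancel (by lia)]
  have annihilates : (ω ^ (q - 1)) ^ (m + p ^ (n * (r - 1))) = 1 :=
    geom_sum_eq ▸ pow_sub_one_pow_geom_sum_eq_one hF ω
  exact (cycNum_le_ncard_pow_eq annihilates a b).trans
    (ncard_pow_eq_and_add_one_pow_eq_le p m_ne_zero _ _ _)

end FiniteField

theorem two_mul_geom_sum_le {q : ℕ} (hq : 2 ≤ q) (j : ℕ) :
    2 * ∑ i ∈ Finset.range (j + 1), q ^ i ≤ (j + 2) * q ^ j + 1 := by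
  induction j with
  | zero => simp
  | succ j ih =>
    have step : (j + 2) * q ^ j ≤ (j + 1) * q ^ (j + 1) := calc
      (j + 2) * q ^ j ≤ ((j + 1) * q) * q ^ j := by gcongr; nlinarith
      _ = (j + 1) * q ^ (j + 1) := by ring
    rw [Finset.sum_range_succ]
    linarith

theorem cycNum_odd_prime_bound_general {q r : ℕ} (hr : 2 ≤ r) {F : Type*} [Field F] [Fintype F]
    (hF : Fintype.card F = q ^ r) (ω : Fˣ) (a b : ℕ) :
    cycNum ω (q - 1) a b ≤ r * q ^ (r - 2) + 1 := by
  obtain ⟨j, rfl⟩ := Nat.exists_eq_add_of_le' hr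
  exact (cycNum_le_two_mul_geom_sum hr hF ω a b).trans
    (two_mul_geom_sum_le (two_le_of_card_eq_pow hF) j)

/-- For an odd prime `ℓ` and `r = ℓ`, the cyclotomic number `(a,b)_{q-1}` over `𝔽_{q^ℓ}`
is at most `ℓ q^{ℓ-2} + 1` if `p = ℓ`, and at most `ℓ q^{ℓ-2} + ℓ - 1` if `p ≠ ℓ`. -/
theorem cycNum_odd_prime_bound {p n q ℓ k : ℕ} (hp : p.Prime) (hn : 1 ≤ n) (hq : q = p ^ n)
    (hℓ : ℓ.Prime) (hodd : Odd ℓ) (hk : k = (q ^ ℓ - 1) / (q - 1))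
    {F : Type*} [Field F] [Fintype F] (hF : Fintype.card F = q ^ ℓ)
    (ω : Fˣ) (hω : ∀ x : Fˣ, x ∈ Subgroup.zpowers ω)
    (a b : ℕ) (ha : a ≤ q - 2) (hb : b ≤ q - 2) :
    (p = ℓ → cycNum ω (q - 1) a b ≤ ℓ * q ^ (ℓ - 2) + 1) ∧
    (p ≠ ℓ → cycNum ω (q - 1) a b ≤ ℓ * q ^ (ℓ - 2) + ℓ - 1) := by
  have bound := cycNum_odd_prime_bound_general hℓ.two_le hF ω a b
  exact ⟨fun _ ↦ bound, fun _ ↦ bound.trans (by have := hℓ.two_le; lia)⟩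
end

section
/- Let q = p^n be a prime power, take r = 3, k = (q^3 − 1)/(q − 1) = q^2 + q + 1, and 0 ≤ a,b ≤ q−2. Put A(X) = X^3 − ω^{ak}, B(X) = (X+1)^3 − ω^{bk} ∈ 𝔽_q[X], T_3(a,b) = {x ∈ 𝔽_q : x^3 = ω^{ak} and (x+1)^3 = ω^{bk}}, and λ = 0 if p = 2 and λ = (q−1)/2 if p is odd. Then: #T_3(a,b) = 1 if p = 3 and 1 + ω^{ak} − ω^{bk} = 0; #T_3(a,b) = 0 if p = 3 and 1 + ω^{ak} − ω^{bk} ≠ 0; #T_3(a,b) = 2 if p ≠ 3, (a,b) = (0,λ), and 3 ∣ (q−1); #T_3(a,b) = 0 if p ≠ 3, (a,b) = (0,λ), and 3 ∤ (q−1); #T_3(a,b) = 1 if p ≠ 3, (a,b) ≠ (0,λ), and Res(A,B) = 0; and #T_3(a,b) = 0 if p ≠ 3, (a,b) ≠ (0,λ), and Res(A,B) ≠ 0. -/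
/-- The resultant `Res(A, B)` of `A(X) = X^3 - u` and `B(X) = (X+1)^3 - v`, i.e. the
determinant of their `6 × 6` Sylvester matrix. The coefficient lists are
`A : 1, 0, 0, -u` and `B : 1, 3, 3, 1 - v` (from `X^3` down to the constant term). -/
def res3 {K : Type*} [CommRing K] (u v : K) : K :=
  Matrix.det !![(1 : K), 0, 0, -u, 0, 0;
                0, 1, 0, 0, -u, 0;
                0, 0, 1, 0, 0, -u;
                1, 3, 3, 1 - v, 0, 0;
                0, 1, 3, 3, 1 - v, 0;
                0, 0, 1, 3, 3, 1 - v]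

/-!
Write `1 + u - v = 3 d` when `3` is invertible. One round of the Euclidean algorithm,
`B - A = 3 (X ^ 2 + X + d)` and `A = (X - 1) (X ^ 2 + X + d) + (1 - d) X - (u - d)`, shows that a
common root of `A` and `B` is a root of `X ^ 2 + X + d` with `(1 - d) x = u - d`. If `d ≠ 1` the
only candidate is `(u - d) / (1 - d)`, and it is a root exactly when the resultant
`(1 + u - v) ^ 3 + 27 u v = 27 (d ^ 3 + u v)` vanishes. If `d = 1` the vanishing of the resultant
forces `(u, v) = (1, -1)`, and then the common roots are the primitive cube roots of unity.
In characteristic `3` both equations are solved by inverting Frobenius.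
-/

/-- The set of `x` whose cube is `u` and for which the cube of `x + 1` is `v`. With `u = ζ ^ a` and
`v = ζ ^ b` this is `T_3(a, b)`; it is indexed here by the values of the cubes, not by their
exponents. -/
def consecutiveCubeRoots {R : Type*} [Semiring R] (u v : R) : Set R :=
  {x | x ^ 3 = u ∧ (x + 1) ^ 3 = v}

theorem res3_eq_det_fin_three {R : Type*} [CommRing R] (u v : R) :
    res3 u v = Matrix.det !![1 + u - v, 3 * u, 3 * u;
                             3, 1 + u - v, 3 * u;
                             3, 3, 1 + u - v] := by
  let C : Matrix (Fin 3) (Fin 3) R := !![1, 3, 3; 0, 1, 3; 0, 0, 1]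
  let D : Matrix (Fin 3) (Fin 3) R := !![1 - v, 0, 0; 3, 1 - v, 0; 3, 3, 1 - v]
  have res3_eq_det_blocks : res3 u v = (Matrix.fromBlocks 1 (-u • 1) C D).det := by
    rw [res3, ← Matrix.det_submatrix_equiv_self (finSumFinEquiv : Fin 3 ⊕ Fin 3 ≃ Fin 6)]
    congr 1
    ext (i | i) (j | j) <;> fin_cases i <;> fin_cases j <;> simp [C, D] <;> rfl
  rw [res3_eq_det_blocks, Matrix.det_fromBlocks_one₁₁]
  congr 1
  ext i j
  fin_cases i <;> fin_cases j <;> simp [C, D] <;> ring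

theorem res3_eq {R : Type*} [CommRing R] (u v : R) :
    res3 u v = (1 + u - v) ^ 3 + 27 * u * v := by
  rw [res3_eq_det_fin_three, Matrix.det_fin_three]
  simp only [Matrix.of_apply, Matrix.cons_val]
  ring

theorem eq_one_and_eq_neg_one_of_add_sub_eq_three {R : Type*} [CommRing R] [IsReduced R] {u v : R}
    (hsub : 1 + u - v = 3) (hmul : 1 + u * v = 0) : u = 1 ∧ v = -1 := by
  have hsq : (u - 1) ^ 2 = 0 := by linear_combination hmul + u * hsub
  have hu : u = 1 := sub_eq_zero.1 (pow_eq_zero_iff two_ne_zero |>.1 hsq)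
  exact ⟨hu, by linear_combination hu - hsub⟩

namespace consecutiveCubeRoots

section CommRing

variable {R : Type*} [CommRing R] {u v d x : R}

theorem res3_eq_zero_of_mem (hx : x ∈ consecutiveCubeRoots u v) : res3 u v = 0 := by
  obtain ⟨rfl, rfl⟩ := hx
  rw [res3_eq]
  ring

theorem eq_empty_of_res3_ne_zero (h : res3 u v ≠ 0) : consecutiveCubeRoots u v = ∅ :=
  Set.eq_empty_of_forall_notMem fun _ hx ↦ h (res3_eq_zero_of_mem hx)

section CharThree

variable [CharP R 3]

theorem mem_iff_of_char_three :
    x ∈ consecutiveCubeRoots u v ↔ x ^ 3 = u ∧ 1 + u - v = 0 := by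
  have : Fact (Nat.Prime 3) := ⟨Nat.prime_three⟩
  have cube_add_one : (x + 1) ^ 3 = x ^ 3 + 1 := by rw [add_pow_char, one_pow]
  refine and_congr_right fun hx ↦ ?_
  rw [cube_add_one, hx, add_comm, sub_eq_zero]

theorem eq_empty_of_char_three (h : 1 + u - v ≠ 0) : consecutiveCubeRoots u v = ∅ :=
  Set.eq_empty_of_forall_notMem fun _ hx ↦ h (mem_iff_of_char_three.1 hx).2

theorem ncard_eq_one_of_char_three [PerfectRing R 3] (h : 1 + u - v = 0) :
    (consecutiveCubeRoots u v).ncard = 1 := by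
  have : Fact (Nat.Prime 3) := ⟨Nat.prime_three⟩
  obtain ⟨x, hx, hx_unique⟩ := (bijective_frobenius R 3).existsUnique u
  refine Set.ncard_eq_one.2 ⟨x, Set.eq_singleton_iff_unique_mem.2 ⟨?_, fun y hy ↦ ?_⟩⟩
  · exact mem_iff_of_char_three.2 ⟨hx, h⟩
  · exact hx_unique y (mem_iff_of_char_three.1 hy).1

end CharThree

theorem mem_iff_of_three_ne_zero [IsDomain R] (h3 : (3 : R) ≠ 0) (hd : 1 + u - v = 3 * d) :
    x ∈ consecutiveCubeRoots u v ↔ x ^ 2 + x + d = 0 ∧ (1 - d) * x = u - d := by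
  constructor
  · rintro ⟨hu, hv⟩
    have hquad : x ^ 2 + x + d = 0 := by
      apply mul_left_cancel₀ h3
      linear_combination hv - hu - hd
    exact ⟨hquad, by linear_combination hu - (x - 1) * hquad⟩
  · rintro ⟨hquad, hlin⟩
    have hu : x ^ 3 = u := by linear_combination (x - 1) * hquad + hlin
    exact ⟨hu, by linear_combination hu + 3 * hquad + hd⟩

theorem one_neg_one_eq_primitiveRoots [IsDomain R] (h3 : (3 : R) ≠ 0) :
    consecutiveCubeRoots (1 : R) (-1) = primitiveRoots 3 R := by
  have : NeZero ((3 : ℕ) : R) := ⟨h3⟩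
  ext x
  calc x ∈ consecutiveCubeRoots (1 : R) (-1)
    _ ↔ x ^ 2 + x + 1 = 0 := by
      rw [mem_iff_of_three_ne_zero h3 (d := 1) (by norm_num)]
      simp
    _ ↔ (Polynomial.cyclotomic 3 R).IsRoot x := by
      simp [Polynomial.cyclotomic_three]
    _ ↔ x ∈ (primitiveRoots 3 R : Set R) := by
      rw [Polynomial.isRoot_cyclotomic_iff, Finset.mem_coe, mem_primitiveRoots three_pos]

end CommRing

section Field

variable {K : Type*} [Field K] {u v d : K}

theorem eq_singleton_of_ne_one (h3 : (3 : K) ≠ 0) (hd : 1 + u - v = 3 * d)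
    (hres : d ^ 3 + u * v = 0) (hd1 : d ≠ 1) :
    consecutiveCubeRoots u v = {(u - d) / (1 - d)} := by
  have hsub : 1 - d ≠ 0 := sub_ne_zero.2 hd1.symm
  ext x
  rw [mem_iff_of_three_ne_zero h3 hd, Set.mem_singleton_iff, eq_div_iff hsub, mul_comm x]
  refine and_iff_right_of_imp fun hlin ↦ mul_left_cancel₀ (pow_ne_zero 2 hsub) ?_
  linear_combination hres + u * hd + ((1 - d) * x + (u - d) + (1 - d)) * hlin

theorem ncard_eq_one_of_res3_eq_zero (h3 : (3 : K) ≠ 0) (huv : ¬(u = 1 ∧ v = -1))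
    (hres : res3 u v = 0) : (consecutiveCubeRoots u v).ncard = 1 := by
  obtain ⟨d, hd⟩ : ∃ d, 1 + u - v = 3 * d := ⟨_, (mul_div_cancel₀ _ h3).symm⟩
  have hres' : d ^ 3 + u * v = 0 := by
    rw [res3_eq, hd] at hres
    apply mul_left_cancel₀ (pow_ne_zero 3 h3)
    linear_combination hres
  have hd1 : d ≠ 1 := by
    rintro rfl
    rw [mul_one] at hd
    rw [one_pow] at hres'
    exact huv (eq_one_and_eq_neg_one_of_add_sub_eq_three hd hres')
  rw [eq_singleton_of_ne_one h3 hd hres' hd1, Set.ncard_singleton]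

end Field

end consecutiveCubeRoots

section FiniteField

variable {K : Type*} [Field K] [Fintype K]

theorem isPrimitiveRoot_of_forall_mem_zpowers {ζ : Kˣ} (hζ : ∀ x, x ∈ Subgroup.zpowers ζ) :
    IsPrimitiveRoot (ζ : K) (Fintype.card K - 1) := by
  have hord : orderOf ζ = Fintype.card K - 1 := by
    rw [orderOf_eq_card_of_forall_mem_zpowers hζ, Nat.card_units, Nat.card_eq_fintype_card]
  exact IsPrimitiveRoot.coe_units_iff.2 (hord ▸ IsPrimitiveRoot.orderOf ζ)

theorem dvd_card_sub_one_of_isPrimitiveRoot {m : ℕ} (hm : m ≠ 0) {μ : K}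
    (hμ : IsPrimitiveRoot μ m) : m ∣ Fintype.card K - 1 :=
  hμ.dvd_of_pow_eq_one _ (FiniteField.pow_card_sub_one_eq_one μ (hμ.ne_zero hm))

theorem exists_isPrimitiveRoot_of_dvd_card_sub_one {m : ℕ} (hm : m ∣ Fintype.card K - 1) :
    ∃ μ : K, IsPrimitiveRoot μ m := by
  obtain ⟨ζ, hζ⟩ := IsCyclic.exists_generator (α := Kˣ)
  obtain ⟨l, hl⟩ := exists_eq_mul_left_of_dvd hm
  have hpos : 0 < Fintype.card K - 1 := Nat.sub_pos_of_lt Fintype.one_lt_card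
  exact ⟨_, (isPrimitiveRoot_of_forall_mem_zpowers hζ).pow hpos hl⟩

theorem card_primitiveRoots_of_dvd_card_sub_one {m : ℕ} (hm : m ∣ Fintype.card K - 1) :
    (primitiveRoots m K).card = m.totient := by
  obtain ⟨μ, hμ⟩ := exists_isPrimitiveRoot_of_dvd_card_sub_one hm
  exact hμ.card_primitiveRoots

theorem primitiveRoots_eq_empty_of_not_dvd_card_sub_one {m : ℕ} (hm : ¬m ∣ Fintype.card K - 1) :
    primitiveRoots m K = ∅ := by
  rcases eq_or_ne m 0 with rfl | hm0
  · exact primitiveRoots_zero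
  · exact Finset.eq_empty_of_forall_notMem fun μ hμ ↦
      hm (dvd_card_sub_one_of_isPrimitiveRoot hm0 (isPrimitiveRoot_of_mem_primitiveRoots hμ))

theorem consecutiveCubeRoots.ncard_one_neg_one_of_dvd (h3 : (3 : K) ≠ 0)
    (hdvd : 3 ∣ Fintype.card K - 1) : (consecutiveCubeRoots (1 : K) (-1)).ncard = 2 := by
  rw [one_neg_one_eq_primitiveRoots h3, Set.ncard_coe_finset,
    card_primitiveRoots_of_dvd_card_sub_one hdvd, Nat.totient_prime Nat.prime_three]

theorem consecutiveCubeRoots.one_neg_one_eq_empty_of_not_dvd (h3 : (3 : K) ≠ 0)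
    (hdvd : ¬3 ∣ Fintype.card K - 1) : consecutiveCubeRoots (1 : K) (-1) = ∅ := by
  rw [one_neg_one_eq_primitiveRoots h3, primitiveRoots_eq_empty_of_not_dvd_card_sub_one hdvd,
    Finset.coe_empty]

theorem pow_ite_char_eq_neg_one {p : ℕ} [CharP K p] {ζ : K}
    (hζ : IsPrimitiveRoot ζ (Fintype.card K - 1)) :
    ζ ^ (if p = 2 then 0 else (Fintype.card K - 1) / 2) = -1 := by
  split_ifs with hp
  · subst hp
    rw [pow_zero, CharTwo.neg_eq]
  · have hodd : Fintype.card K % 2 = 1 :=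
      FiniteField.odd_card_of_char_ne_two (by rwa [ringChar.eq K p])
    have hpos : 0 < Fintype.card K - 1 := Nat.sub_pos_of_lt Fintype.one_lt_card
    exact (hζ.pow hpos (by omega)).eq_neg_one_of_two_right

end FiniteField

theorem pow_eq_one_and_pow_eq_neg_one_iff {R : Type*} [CommRing R] {ζ : R} {k l a b : ℕ}
    (hζ : IsPrimitiveRoot ζ k) (hneg : ζ ^ l = -1) (hl : l < k) (ha : a < k) (hb : b < k) :
    (ζ ^ a = 1 ∧ ζ ^ b = -1) ↔ (a, b) = (0, l) := by
  rw [Prod.mk.injEq, ← hneg, ← pow_zero ζ]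
  refine and_congr ⟨hζ.pow_inj ha (by omega), ?_⟩ ⟨hζ.pow_inj hb hl, ?_⟩ <;> exact congrArg _

/-- Case analysis for `#T_3(a,b)` where `T_3(a,b) = {x ∈ 𝔽_q : x^3 = ζ^a, (x+1)^3 = ζ^b}`,
`ζ = ω^k` is a generator of `𝔽_q^×`, `λ = 0` if `p = 2` and `λ = (q-1)/2` if `p` is odd,
and `Res` is the resultant of `X^3 - ζ^a` and `(X+1)^3 - ζ^b`. -/
theorem card_T_three_cases {p n q lam : ℕ} (hp : p.Prime) (hn : 1 ≤ n) (hq : q = p ^ n)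
    (hlam : lam = if p = 2 then 0 else (q - 1) / 2)
    {K : Type*} [Field K] [Fintype K] (hK : Fintype.card K = q)
    (ζ : Kˣ) (hζ : ∀ x : Kˣ, x ∈ Subgroup.zpowers ζ)
    (a b : ℕ) (ha : a ≤ q - 2) (hb : b ≤ q - 2) :
    (p = 3 → 1 + (ζ : K) ^ a - (ζ : K) ^ b = 0 →
      Nat.card {x : K | x ^ 3 = (ζ : K) ^ a ∧ (x + 1) ^ 3 = (ζ : K) ^ b} = 1) ∧
    (p = 3 → 1 + (ζ : K) ^ a - (ζ : K) ^ b ≠ 0 →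
      Nat.card {x : K | x ^ 3 = (ζ : K) ^ a ∧ (x + 1) ^ 3 = (ζ : K) ^ b} = 0) ∧
    (p ≠ 3 → (a, b) = (0, lam) → 3 ∣ (q - 1) →
      Nat.card {x : K | x ^ 3 = (ζ : K) ^ a ∧ (x + 1) ^ 3 = (ζ : K) ^ b} = 2) ∧
    (p ≠ 3 → (a, b) = (0, lam) → ¬ (3 ∣ (q - 1)) →
      Nat.card {x : K | x ^ 3 = (ζ : K) ^ a ∧ (x + 1) ^ 3 = (ζ : K) ^ b} = 0) ∧
    (p ≠ 3 → (a, b) ≠ (0, lam) → res3 ((ζ : K) ^ a) ((ζ : K) ^ b) = 0 →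
      Nat.card {x : K | x ^ 3 = (ζ : K) ^ a ∧ (x + 1) ^ 3 = (ζ : K) ^ b} = 1) ∧
    (p ≠ 3 → (a, b) ≠ (0, lam) → res3 ((ζ : K) ^ a) ((ζ : K) ^ b) ≠ 0 →
      Nat.card {x : K | x ^ 3 = (ζ : K) ^ a ∧ (x + 1) ^ 3 = (ζ : K) ^ b} = 0) := by
  subst hK
  have : Fact p.Prime := ⟨hp⟩
  have : CharP K p := charP_of_card_eq_prime_pow hq
  have hcard : 1 < Fintype.card K := Fintype.one_lt_card
  have hζ' : IsPrimitiveRoot (ζ : K) (Fintype.card K - 1) :=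
    isPrimitiveRoot_of_forall_mem_zpowers hζ
  have hneg : (ζ : K) ^ lam = -1 := hlam ▸ pow_ite_char_eq_neg_one hζ'
  have hlam_lt : lam < Fintype.card K - 1 := by split_ifs at hlam <;> omega
  have h3 : p ≠ 3 → (3 : K) ≠ 0 := CharP.cast_ne_zero_of_ne_of_prime K Nat.prime_three
  simp only [Nat.card_coe_set_eq, ne_eq,
    ← pow_eq_one_and_pow_eq_neg_one_iff hζ' hneg hlam_lt (by omega : a < _) (by omega : b < _)]
  refine ⟨?_, ?_, fun hp3 ⟨hu, hv⟩ hdvd ↦ ?_, fun hp3 ⟨hu, hv⟩ hdvd ↦ ?_, fun hp3 hab hres ↦ ?_,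
    fun _ _ hres ↦ ?_⟩
  · rintro rfl h
    exact consecutiveCubeRoots.ncard_eq_one_of_char_three h
  · rintro rfl h
    exact (Set.ncard_eq_zero (Set.toFinite _)).2 (consecutiveCubeRoots.eq_empty_of_char_three h)
  · rw [hu, hv]
    exact consecutiveCubeRoots.ncard_one_neg_one_of_dvd (h3 hp3) hdvd
  · rw [hu, hv]
    exact (Set.ncard_eq_zero (Set.toFinite _)).2
      (consecutiveCubeRoots.one_neg_one_eq_empty_of_not_dvd (h3 hp3) hdvd)
  · exact consecutiveCubeRoots.ncard_eq_one_of_res3_eq_zero (h3 hp3) hab hres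
  · exact (Set.ncard_eq_zero (Set.toFinite _)).2
      (consecutiveCubeRoots.eq_empty_of_res3_ne_zero hres)
end

section
/- Let q = p^n be a prime power, take r = 3, k = q^2 + q + 1, and 0 ≤ a,b ≤ q−2. Let I_3(a,b) be the set of monic irreducible cubic polynomials f ∈ 𝔽_q[X] with f(0) = −ω^{ak} and f(−1) = −ω^{bk}, and define φ_{a,b} : 𝔽_q∖{0,−1} → 𝔽_q by φ_{a,b}(x) = x − 1 − ω^{ak}/x + ω^{bk}/(x+1). Then #I_3(a,b) = q − #Im(φ_{a,b}). In particular, 2 ≤ #I_3(a,b) ≤ ⌊(2q+2)/3⌋. -/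
/-!
A monic cubic with `f(0) = -A` and `f(-1) = -B` is determined by the sum `s` of its roots, and off
`{0, -1}` it factors as `f(x) = x (x + 1) (φ(x) - s)` with `φ(x) = x - 1 - A / x + B / (x + 1)`.
For `A, B ≠ 0` its roots are therefore the solutions of `φ(x) = s`, so it is irreducible exactly
when `s` is not a value of `φ`. The bounds hold because `φ` is defined at `q - 2` points and takes
each value at most three times.
-/

open Polynomial

section Ring

variable {R : Type*} [CommRing R]

/-- The monic cubic `f` with `f(0) = -A`, `f(-1) = -B` whose roots sum to `s`. -/
noncomputable def interpolatingCubic (A B s : R) : R[X] :=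
  Cubic.toPoly ⟨1, -s, B - A - s - 1, -A⟩

lemma monic_interpolatingCubic (A B s : R) : (interpolatingCubic A B s).Monic :=
  Cubic.monic_of_a_eq_one rfl

lemma natDegree_interpolatingCubic [Nontrivial R] (A B s : R) :
    (interpolatingCubic A B s).natDegree = 3 :=
  Cubic.natDegree_of_a_ne_zero one_ne_zero

lemma eval_interpolatingCubic (A B s x : R) :
    (interpolatingCubic A B s).eval x = x ^ 3 - s * x ^ 2 + (B - A - s - 1) * x - A := by
  simp only [interpolatingCubic, Cubic.toPoly, eval_add, eval_mul, eval_C, eval_pow, eval_X]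
  ring

lemma eval_zero_interpolatingCubic (A B s : R) : (interpolatingCubic A B s).eval 0 = -A := by
  simp [eval_interpolatingCubic]

lemma eval_neg_one_interpolatingCubic (A B s : R) :
    (interpolatingCubic A B s).eval (-1) = -B := by
  rw [eval_interpolatingCubic]
  ring

lemma interpolatingCubic_injective (A B : R) : Function.Injective (interpolatingCubic A B) :=
  fun _ _ h ↦ neg_injective (congrArg Cubic.b ((Cubic.toPoly_injective _ _).1 h))

lemma exists_eq_interpolatingCubic {A B : R} {f : R[X]} (hmonic : f.Monic)
    (hdeg : f.natDegree = 3) (hzero : f.eval 0 = -A) (hneg : f.eval (-1) = -B) :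
    ∃ s, f = interpolatingCubic A B s := by
  obtain ⟨⟨a, b, c, d⟩, hP⟩ :=
    Cubic.equiv.surjective ⟨f, degree_le_of_natDegree_le hdeg.le⟩
  obtain rfl : Cubic.toPoly ⟨a, b, c, d⟩ = f := congrArg Subtype.val hP
  obtain rfl : a = 1 := by simpa [Monic, leadingCoeff, hdeg] using hmonic
  obtain rfl : d = -A := by simpa [Cubic.toPoly] using hzero
  obtain rfl : c = B - A + b - 1 := by
    simp only [Cubic.toPoly, eval_add, eval_mul, eval_C, eval_pow, eval_X] at hneg
    linear_combination -hneg
  exact ⟨-b, by rw [interpolatingCubic, neg_neg, sub_neg_eq_add]⟩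

end Ring

section Field

variable {K : Type*} [Field K]

/-- The rational function `φ(x) = x - 1 - A / x + B / (x + 1)`, meaningful off `{0, -1}`; Lean's
convention `y / 0 = 0` gives it values at the poles, so its image is taken over `{0, -1}ᶜ`. -/
def phi (A B x : K) : K :=
  x - 1 - A / x + B / (x + 1)

/-- The set `I₃` of monic irreducible cubics with `f(0) = -A` and `f(-1) = -B`. -/
def irreducibleCubics (A B : K) : Set K[X] :=
  {f | f.Monic ∧ Irreducible f ∧ f.natDegree = 3 ∧ f.eval 0 = -A ∧ f.eval (-1) = -B}

lemma eval_interpolatingCubic_eq_mul_phi_sub (A B s : K) {x : K} (hx : x ∈ ({0, -1} : Set K)ᶜ) :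
    (interpolatingCubic A B s).eval x = x * (x + 1) * (phi A B x - s) := by
  obtain ⟨hx₀, hx₁⟩ : x ≠ 0 ∧ x ≠ -1 := by simpa using hx
  have hx₁' : x + 1 ≠ 0 := mt eq_neg_of_add_eq_zero_left hx₁
  rw [eval_interpolatingCubic, phi]
  field_simp
  ring

variable {A B : K}

lemma isRoot_interpolatingCubic_iff (hA : A ≠ 0) (hB : B ≠ 0) (s x : K) :
    (interpolatingCubic A B s).IsRoot x ↔ x ∈ ({0, -1} : Set K)ᶜ ∧ phi A B x = s := by
  by_cases hx : x ∈ ({0, -1} : Set K)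
  · have hne : (interpolatingCubic A B s).eval x ≠ 0 := by
      rcases hx with rfl | rfl
      · simpa [eval_zero_interpolatingCubic] using hA
      · simpa [eval_neg_one_interpolatingCubic] using hB
    simp [IsRoot, hne, hx]
  · obtain ⟨hx₀, hx₁⟩ : x ≠ 0 ∧ x ≠ -1 := by simpa using hx
    rw [IsRoot, eval_interpolatingCubic_eq_mul_phi_sub A B s hx]
    simp [hx₀, hx₁, add_eq_zero_iff_eq_neg, sub_eq_zero]

lemma irreducible_interpolatingCubic_iff (hA : A ≠ 0) (hB : B ≠ 0) (s : K) :
    Irreducible (interpolatingCubic A B s) ↔ s ∉ phi A B '' {0, -1}ᶜ := by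
  have hdeg := natDegree_interpolatingCubic A B s
  rw [irreducible_iff_roots_eq_zero_of_degree_le_three (by omega) hdeg.le,
    Multiset.eq_zero_iff_forall_notMem]
  simp only [mem_roots (monic_interpolatingCubic A B s).ne_zero,
    isRoot_interpolatingCubic_iff hA hB, Set.mem_image, not_exists]

lemma irreducibleCubics_eq_image (hA : A ≠ 0) (hB : B ≠ 0) :
    irreducibleCubics A B = interpolatingCubic A B '' (phi A B '' {0, -1}ᶜ)ᶜ := by
  ext f
  constructor
  · rintro ⟨hmonic, hirr, hdeg, hzero, hneg⟩
    obtain ⟨s, rfl⟩ := exists_eq_interpolatingCubic hmonic hdeg hzero hneg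
    exact ⟨s, (irreducible_interpolatingCubic_iff hA hB s).1 hirr, rfl⟩
  · rintro ⟨s, hs, rfl⟩
    exact ⟨monic_interpolatingCubic A B s, (irreducible_interpolatingCubic_iff hA hB s).2 hs,
      natDegree_interpolatingCubic A B s, eval_zero_interpolatingCubic A B s,
      eval_neg_one_interpolatingCubic A B s⟩

lemma ncard_irreducibleCubics (hA : A ≠ 0) (hB : B ≠ 0) :
    (irreducibleCubics A B).ncard = (phi A B '' {0, -1}ᶜ)ᶜ.ncard := by
  rw [irreducibleCubics_eq_image hA hB,
    Set.ncard_image_of_injective _ (interpolatingCubic_injective A B)]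

lemma card_le_three_mul_card_image_phi [DecidableEq K] (hA : A ≠ 0) (hB : B ≠ 0) {T : Finset K}
    (hT : (T : Set K) ⊆ {0, -1}ᶜ) : T.card ≤ 3 * (T.image (phi A B)).card := by
  refine Finset.card_le_mul_card_image T 3 fun s _ ↦ ?_
  have hroots : {x ∈ T | phi A B x = s} ⊆ (interpolatingCubic A B s).roots.toFinset := by
    intro x hx
    obtain ⟨hxT, hxs⟩ := Finset.mem_filter.1 hx
    rw [Multiset.mem_toFinset, mem_roots (monic_interpolatingCubic A B s).ne_zero,
      isRoot_interpolatingCubic_iff hA hB]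
    exact ⟨hT hxT, hxs⟩
  calc {x ∈ T | phi A B x = s}.card
      ≤ (interpolatingCubic A B s).roots.toFinset.card := Finset.card_le_card hroots
    _ ≤ (interpolatingCubic A B s).roots.card := Multiset.toFinset_card_le _
    _ ≤ (interpolatingCubic A B s).natDegree := card_roots' _
    _ = 3 := natDegree_interpolatingCubic A B s

lemma ncard_le_three_mul_ncard_image_phi (hA : A ≠ 0) (hB : B ≠ 0) {T : Set K} (hfin : T.Finite)
    (hT : T ⊆ {0, -1}ᶜ) : T.ncard ≤ 3 * (phi A B '' T).ncard := by
  classical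
  lift T to Finset K using hfin
  rw [← Finset.coe_image, Set.ncard_coe_finset, Set.ncard_coe_finset]
  exact card_le_three_mul_card_image_phi hA hB hT

section Finite

variable [Finite K]

lemma ncard_compl_zero_neg_one : ({0, -1} : Set K)ᶜ.ncard = Nat.card K - 2 := by
  rw [Set.ncard_compl, Set.ncard_pair (by simp)]

lemma ncard_irreducibleCubics_eq_sub (hA : A ≠ 0) (hB : B ≠ 0) :
    (irreducibleCubics A B).ncard = Nat.card K - (phi A B '' {0, -1}ᶜ).ncard := by
  rw [ncard_irreducibleCubics hA hB, Set.ncard_compl]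

lemma two_le_ncard_irreducibleCubics (hA : A ≠ 0) (hB : B ≠ 0) :
    2 ≤ (irreducibleCubics A B).ncard := by
  have himage : (phi A B '' {0, -1}ᶜ).ncard ≤ Nat.card K - 2 :=
    (Set.ncard_image_le (Set.toFinite _)).trans_eq ncard_compl_zero_neg_one
  have hcard : 1 < Nat.card K := Finite.one_lt_card
  rw [ncard_irreducibleCubics_eq_sub hA hB]
  omega

lemma ncard_irreducibleCubics_le (hA : A ≠ 0) (hB : B ≠ 0) :
    (irreducibleCubics A B).ncard ≤ (2 * Nat.card K + 2) / 3 := by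
  have himage : Nat.card K - 2 ≤ 3 * (phi A B '' {0, -1}ᶜ).ncard :=
    ncard_compl_zero_neg_one.symm.trans_le
      (ncard_le_three_mul_ncard_image_phi hA hB (Set.toFinite _) subset_rfl)
  rw [ncard_irreducibleCubics_eq_sub hA hB]
  omega

end Finite

end Field

/-- For `r = 3` and `ζ = ω^k` a generator of `𝔽_q^×`, the number of monic irreducible cubic
polynomials `f` over `𝔽_q` with `f(0) = -ζ^a` and `f(-1) = -ζ^b` equals `q - #Im(φ_{a,b})`,
where `φ_{a,b}(x) = x - 1 - ζ^a/x + ζ^b/(x+1)` on `𝔽_q ∖ {0,-1}`; in particular this count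
lies between `2` and `⌊(2q+2)/3⌋`. -/
theorem card_I_three {p n q : ℕ} (hp : p.Prime) (hn : 1 ≤ n) (hq : q = p ^ n)
    {K : Type*} [Field K] [Fintype K] (hK : Fintype.card K = q)
    (ζ : Kˣ) (hζ : ∀ x : Kˣ, x ∈ Subgroup.zpowers ζ)
    (a b : ℕ) (ha : a ≤ q - 2) (hb : b ≤ q - 2) :
    Nat.card {f : Polynomial K | f.Monic ∧ Irreducible f ∧ f.natDegree = 3 ∧
        f.eval 0 = -(ζ : K) ^ a ∧ f.eval (-1) = -(ζ : K) ^ b} =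
      q - Nat.card {s : K | ∃ x : K, x ≠ 0 ∧ x ≠ -1 ∧
        s = x - 1 - (ζ : K) ^ a / x + (ζ : K) ^ b / (x + 1)} ∧
    2 ≤ Nat.card {f : Polynomial K | f.Monic ∧ Irreducible f ∧ f.natDegree = 3 ∧
        f.eval 0 = -(ζ : K) ^ a ∧ f.eval (-1) = -(ζ : K) ^ b} ∧
    Nat.card {f : Polynomial K | f.Monic ∧ Irreducible f ∧ f.natDegree = 3 ∧
        f.eval 0 = -(ζ : K) ^ a ∧ f.eval (-1) = -(ζ : K) ^ b} ≤ (2 * q + 2) / 3 := by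
  have hA : (ζ : K) ^ a ≠ 0 := pow_ne_zero a ζ.ne_zero
  have hB : (ζ : K) ^ b ≠ 0 := pow_ne_zero b ζ.ne_zero
  have himage : {s : K | ∃ x : K, x ≠ 0 ∧ x ≠ -1 ∧
      s = x - 1 - (ζ : K) ^ a / x + (ζ : K) ^ b / (x + 1)} =
        phi ((ζ : K) ^ a) ((ζ : K) ^ b) '' {0, -1}ᶜ := by
    ext s
    simp [phi, and_assoc, eq_comm]
  rw [Nat.card_coe_set_eq, Nat.card_coe_set_eq, himage, ← irreducibleCubics, ← hK,
    ← Nat.card_eq_fintype_card]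
  exact ⟨ncard_irreducibleCubics_eq_sub hA hB, two_le_ncard_irreducibleCubics hA hB,
    ncard_irreducibleCubics_le hA hB⟩
end
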